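/- arXiv:2604.20375 — 2 statements merged into one kernel-verified Lean document; each statement's English description precedes it below -/
import Mathlib

section
/- Under the two-dimensional setup with T = ∞: for any 0 < t₀ ≤ t, the area A(t) := 2π ∫₀^{r₀} e^{2u(r,t)} sinh(r) dr satisfies A(t) ≥ A(t₀) + 2·L₀·∫_{t₀}^{t} e^{−2τ} (∫_{t₀}^{τ} e^{2y} η'(y) dy) dτ, where L₀ = 2π sinh(r₀) is the length of the boundary circle with respect to the initial hyperbolic metric. Consequently, if there exist ε > 0 and T' > 0 such that η'(t) ≥ ε (1+t)^{−1} (ln(1+t))^{−1} for all t ≥ T', then A(t) → ∞ as t → ∞. -/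
open Real MeasureTheory Filter

/-- Partial derivative in the radial variable `r`. -/
noncomputable def pr (f : ℝ → ℝ → ℝ) (r t : ℝ) : ℝ := deriv (fun x => f x t) r

/-- Partial derivative in the time variable `t`. -/
noncomputable def pt (f : ℝ → ℝ → ℝ) (r t : ℝ) : ℝ := deriv (fun τ => f r τ) t

/-- The Gauss curvature `K_g = -e^{-2u}(∂ᵣ²u + coth(r)·∂ᵣu + 1)` of the conformal
metric `g = e^{2u}(dr² + sinh²(r) dθ²)`. -/
noncomputable def K2 (u : ℝ → ℝ → ℝ) (r t : ℝ) : ℝ :=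
  -Real.exp (-2 * u r t) *
    (deriv (fun x => pr u x t) r + Real.cosh r / Real.sinh r * pr u r t + 1)

/-- Setup: rotationally symmetric normalized Ricci flow `∂ₜg = -2(K_g + 1)g`,
`g(t) = e^{2u(r,t)}(dr² + sinh²(r) dθ²)`, on the closed geodesic ball of radius `r₀`
in the hyperbolic plane, starting from the hyperbolic metric, with prescribed
non-decreasing geodesic curvature `η(t)` on the boundary, for `t ∈ [0,T)`, `T ∈ (0,∞]`. -/
structure Setup2 (r₀ : ℝ) (T : EReal) (u : ℝ → ℝ → ℝ) (η : ℝ → ℝ) : Prop where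
  hr₀ : 0 < r₀
  hT : 0 < T
  hu_smooth : ContDiff ℝ (⊤ : ℕ∞) (Function.uncurry u)
  hu_origin : ∀ t : ℝ, 0 ≤ t → (t : EReal) < T → pr u 0 t = 0
  hu_evol : ∀ r t : ℝ, r ∈ Set.Ioc 0 r₀ → 0 ≤ t → (t : EReal) < T →
    pt u r t = Real.exp (-2 * u r t) *
      (deriv (fun x => pr u x t) r + Real.cosh r / Real.sinh r * pr u r t + 1) - 1
  hu_init : ∀ r ∈ Set.Icc 0 r₀, u r 0 = 0
  hbdry : ∀ t : ℝ, 0 ≤ t → (t : EReal) < T →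
    pr u r₀ t + Real.cosh r₀ / Real.sinh r₀ = η t * Real.exp (u r₀ t)
  hη_smooth : ContDiff ℝ 2 η
  hη_mono : ∀ s t : ℝ, 0 ≤ s → s ≤ t → η s ≤ η t
  hη_init : η 0 = Real.cosh r₀ / Real.sinh r₀
  hη_deriv0 : deriv η 0 = 0
  hη_incr : ∃ t₀ > 0, ∀ t : ℝ, 0 < t → t < t₀ → 0 < deriv η t

/-!
The time derivative `u_t` solves the linearised flow with a Robin boundary condition whose source
`η' e^u` is non-negative, so the minimum principle gives `u_t ≥ 0`, hence `u ≥ 0` and the boundary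
length `ℓ` is non-decreasing from `L₀`. By Gauss-Bonnet the area satisfies `A' = 2ηℓ - 4π - 2A`.
Differentiating, `(e^{2t} A')' = 2 e^{2t} (ηℓ)' ≥ 2 L₀ e^{2t} η'`, and two integrations starting
from `A'(0) = 0` give the lower bound. If moreover `η' ≥ ε / ((1 + t) log (1 + t))`, then `η` grows
like `ε log log t` at least, and `A' + 2A ≥ 2 L₀ η - 4π → ∞` forces `A → ∞`.
-/

open scoped Topology


/-! ### Partial derivatives -/

section PartialDerivatives

variable {F : ℝ → ℝ → ℝ}

lemma contDiff_radial_slice {n : WithTop ℕ∞} (hF : ContDiff ℝ n (Function.uncurry F)) (t : ℝ) :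
    ContDiff ℝ n (fun r => F r t) :=
  hF.comp (contDiff_id.prodMk contDiff_const)

lemma hasDerivAt_fderiv_pr (hF : Differentiable ℝ (Function.uncurry F)) (r t : ℝ) :
    HasDerivAt (fun x => F x t) (fderiv ℝ (Function.uncurry F) (r, t) (1, 0)) r :=
  (hF (r, t)).hasFDerivAt.comp_hasDerivAt (f := fun x => (x, t)) r
    ((hasDerivAt_id r).prodMk (hasDerivAt_const r t))

lemma hasDerivAt_fderiv_pt (hF : Differentiable ℝ (Function.uncurry F)) (r t : ℝ) :
    HasDerivAt (fun s => F r s) (fderiv ℝ (Function.uncurry F) (r, t) (0, 1)) t :=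
  (hF (r, t)).hasFDerivAt.comp_hasDerivAt t ((hasDerivAt_const t r).prodMk (hasDerivAt_id t))

lemma hasDerivAt_pr (hF : Differentiable ℝ (Function.uncurry F)) (r t : ℝ) :
    HasDerivAt (fun x => F x t) (pr F r t) r :=
  (hasDerivAt_fderiv_pr hF r t).differentiableAt.hasDerivAt

lemma hasDerivAt_pt (hF : Differentiable ℝ (Function.uncurry F)) (r t : ℝ) :
    HasDerivAt (fun s => F r s) (pt F r t) t :=
  (hasDerivAt_fderiv_pt hF r t).differentiableAt.hasDerivAt

lemma uncurry_pr_eq_fderiv (hF : Differentiable ℝ (Function.uncurry F)) :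
    Function.uncurry (pr F) = fun p => fderiv ℝ (Function.uncurry F) p (1, 0) :=
  funext fun p => (hasDerivAt_fderiv_pr hF p.1 p.2).deriv

lemma uncurry_pt_eq_fderiv (hF : Differentiable ℝ (Function.uncurry F)) :
    Function.uncurry (pt F) = fun p => fderiv ℝ (Function.uncurry F) p (0, 1) :=
  funext fun p => (hasDerivAt_fderiv_pt hF p.1 p.2).deriv

lemma contDiff_pr {m n : WithTop ℕ∞} (hF : ContDiff ℝ n (Function.uncurry F)) (hmn : m + 1 ≤ n) :
    ContDiff ℝ m (Function.uncurry (pr F)) := by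
  rw [uncurry_pr_eq_fderiv (hF.differentiable (by rintro rfl; simp at hmn))]
  exact (hF.fderiv_right hmn).clm_apply contDiff_const

lemma contDiff_pt {m n : WithTop ℕ∞} (hF : ContDiff ℝ n (Function.uncurry F)) (hmn : m + 1 ≤ n) :
    ContDiff ℝ m (Function.uncurry (pt F)) := by
  rw [uncurry_pt_eq_fderiv (hF.differentiable (by rintro rfl; simp at hmn))]
  exact (hF.fderiv_right hmn).clm_apply contDiff_const

lemma pr_pt_comm (hF : ContDiff ℝ 2 (Function.uncurry F)) : pr (pt F) = pt (pr F) := by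
  have hF' : Differentiable ℝ (Function.uncurry F) := hF.differentiable two_ne_zero
  have hdF : Differentiable ℝ (fderiv ℝ (Function.uncurry F)) :=
    (hF.fderiv_right (m := 1) one_add_one_eq_two.le).differentiable one_ne_zero
  have hpr : Differentiable ℝ (Function.uncurry (pr F)) :=
    (contDiff_pr hF one_add_one_eq_two.le).differentiable one_ne_zero
  have hpt : Differentiable ℝ (Function.uncurry (pt F)) :=
    (contDiff_pt hF one_add_one_eq_two.le).differentiable one_ne_zero
  have hsymm (p : ℝ × ℝ) : IsSymmSndFDerivAt ℝ (Function.uncurry F) p :=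
    hF.contDiffAt.isSymmSndFDerivAt (by simp)
  have hsnd (p v w : ℝ × ℝ) : fderiv ℝ (fun q => fderiv ℝ (Function.uncurry F) q v) p w =
      fderiv ℝ (fderiv ℝ (Function.uncurry F)) p w v := by
    simp [fderiv_clm_apply (hdF p) (differentiableAt_const v)]
  apply Function.uncurry_injective
  ext p
  rw [uncurry_pr_eq_fderiv hpt, uncurry_pt_eq_fderiv hpr, uncurry_pt_eq_fderiv hF',
    uncurry_pr_eq_fderiv hF']
  simp only [hsnd]
  exact (hsymm p).eq _ _

lemma hasDerivAt_intervalIntegral_pt (hF : ContDiff ℝ 1 (Function.uncurry F)) (a b t : ℝ) :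
    HasDerivAt (fun s => ∫ r in a..b, F r s) (∫ r in a..b, pt F r t) t := by
  have hpt : Continuous (Function.uncurry (pt F)) := (contDiff_pt hF (zero_add 1).le).continuous
  obtain ⟨M, hM⟩ := ((isCompact_uIcc (a := a) (b := b)).prod
    (isCompact_Icc (a := t - 1) (b := t + 1))).exists_bound_of_continuousOn hpt.continuousOn
  exact (intervalIntegral.hasDerivAt_integral_of_dominated_loc_of_deriv_le
    (F := fun s r => F r s) (F' := fun s r => pt F r s) (bound := fun _ => M)
    (s := Set.Icc (t - 1) (t + 1)) (Icc_mem_nhds (by linarith) (by linarith))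
    (.of_forall fun s => (hF.continuous.uncurry_right s).aestronglyMeasurable)
    ((hF.continuous.uncurry_right t).intervalIntegrable _ _)
    (hpt.uncurry_right t).aestronglyMeasurable
    (.of_forall fun r hr s hs => hM (r, s) ⟨Set.uIoc_subset_uIcc hr, hs⟩)
    intervalIntegrable_const
    (.of_forall fun r _ s _ => hasDerivAt_pt (hF.differentiable one_ne_zero) r s)).2

end PartialDerivatives

/-! ### The radial Laplacian of the hyperbolic plane -/

/-- The Laplacian `f'' + coth(r) f'` of the hyperbolic plane, acting on radial functions. At `r = 0`
the division by `sinh 0 = 0` makes it `f''(0)` instead of the true value `2 f''(0)`; it is only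
evaluated at `r > 0`. -/
noncomputable def radialLaplacian (f : ℝ → ℝ) (r : ℝ) : ℝ :=
  deriv (deriv f) r + cosh r / sinh r * deriv f r

section RadialLaplacian

variable {f g : ℝ → ℝ} {r : ℝ}

lemma differentiable_deriv_of_contDiff_two (hf : ContDiff ℝ 2 f) : Differentiable ℝ (deriv f) :=
  (hf.iterate_deriv' 1 1).differentiable one_ne_zero

lemma radialLaplacian_add_const_mul (hf : ContDiff ℝ 2 f) (hg : ContDiff ℝ 2 g) (c r : ℝ) :
    radialLaplacian (fun x => f x + c * g x) r = radialLaplacian f r + c * radialLaplacian g r := by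
  have hderiv : deriv (fun x => f x + c * g x) = fun x => deriv f x + c * deriv g x := by
    ext x
    exact ((hf.differentiable two_ne_zero x).hasDerivAt.add
      ((hg.differentiable two_ne_zero x).hasDerivAt.const_mul c)).deriv
  have hderiv₂ : deriv (fun x => deriv f x + c * deriv g x) r =
      deriv (deriv f) r + c * deriv (deriv g) r :=
    ((differentiable_deriv_of_contDiff_two hf r).hasDerivAt.add
      ((differentiable_deriv_of_contDiff_two hg r).hasDerivAt.const_mul c)).deriv
  simp only [radialLaplacian, hderiv, hderiv₂]
  ring

lemma hasDerivAt_sinh_mul_deriv (hf : ContDiff ℝ 2 f) (hr : r ≠ 0) :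
    HasDerivAt (fun x => sinh x * deriv f x) (sinh r * radialLaplacian f r) r := by
  refine ((hasDerivAt_sinh r).mul
    (differentiable_deriv_of_contDiff_two hf r).hasDerivAt).congr_deriv ?_
  have hsinh : sinh r ≠ 0 := sinh_ne_zero.2 hr
  rw [radialLaplacian]
  field_simp
  ring

/-- A one-sided second derivative test. The divergence form `(sinh · f')' = sinh · Δf` treats the
origin, where `sinh` vanishes, and interior minima, where `f'` vanishes, alike. -/
lemma frequently_radialLaplacian_nonneg {b : ℝ} (hf : ContDiff ℝ 2 f) (hr : 0 ≤ r) (hrb : r < b)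
    (hmin : IsMinOn f (Set.Icc 0 b) r) : ∃ᶠ ρ in 𝓝[>] r, 0 ≤ radialLaplacian f ρ := by
  have hf' : Differentiable ℝ f := hf.differentiable two_ne_zero
  have hflux : sinh r * deriv f r = 0 := by
    rcases hr.eq_or_lt with rfl | hr_pos
    · simp
    · rw [(hmin.isLocalMin (Icc_mem_nhds hr_pos hrb)).deriv_eq_zero, mul_zero]
  rw [frequently_iff]
  intro U hU
  obtain ⟨z, hz : r < z, hzU⟩ := mem_nhdsGT_iff_exists_Ioo_subset.1 hU
  have hry : r < min z b := lt_min hz hrb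
  obtain ⟨ξ, ⟨hrξ, hξy⟩, hξ⟩ := exists_deriv_eq_slope f hry hf'.continuous.continuousOn
    hf'.differentiableOn
  have hξ_nonneg : 0 ≤ deriv f ξ := by
    rw [hξ]
    exact div_nonneg (sub_nonneg.2 (hmin ⟨hr.trans hry.le, min_le_right _ _⟩))
      (sub_nonneg.2 hry.le)
  obtain ⟨ρ, ⟨hrρ, hρξ⟩, hρ⟩ := exists_hasDerivAt_eq_slope (fun x => sinh x * deriv f x)
    (fun x => sinh x * radialLaplacian f x) hrξ
    (continuous_sinh.mul (differentiable_deriv_of_contDiff_two hf).continuous).continuousOn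
    (fun x hx => hasDerivAt_sinh_mul_deriv hf (hr.trans_lt hx.1).ne')
  refine ⟨ρ, hzU ⟨hrρ, hρξ.trans (hξy.trans_le (min_le_left _ _))⟩, ?_⟩
  have hflux_ξ : 0 ≤ sinh ξ * deriv f ξ :=
    mul_nonneg (sinh_nonneg_iff.2 (hr.trans hrξ.le)) hξ_nonneg
  refine nonneg_of_mul_nonneg_right ?_ (sinh_pos_iff.2 (hr.trans_lt hrρ))
  rw [hρ, hflux, sub_zero]
  exact div_nonneg hflux_ξ (sub_nonneg.2 hrξ.le)

lemma hasDerivAt_radialLaplacian_slice {F : ℝ → ℝ → ℝ} (hF : ContDiff ℝ 3 (Function.uncurry F))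
    (r t : ℝ) :
    HasDerivAt (fun s => radialLaplacian (fun x => F x s) r)
      (radialLaplacian (fun x => pt F x t) r) t := by
  have hpr : ContDiff ℝ 2 (Function.uncurry (pr F)) := contDiff_pr hF (by norm_num)
  have hprpr : ContDiff ℝ 1 (Function.uncurry (pr (pr F))) := contDiff_pr hpr (by norm_num)
  refine ((hasDerivAt_pt (hprpr.differentiable one_ne_zero) r t).add
    ((hasDerivAt_pt (hpr.differentiable two_ne_zero) r t).const_mul
      (cosh r / sinh r))).congr_deriv ?_
  rw [← pr_pt_comm hpr, ← pr_pt_comm (hF.of_le (by norm_num))]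
  rfl

end RadialLaplacian

/-! ### The parabolic minimum principle -/

lemma hasDerivAt_nonpos_of_isMinOn_Icc {f : ℝ → ℝ} {f' a b : ℝ} (hab : a < b)
    (hf : HasDerivAt f f' b) (hmin : IsMinOn f (Set.Icc a b) b) : f' ≤ 0 := by
  have hdir : a - b ∈ posTangentConeAt (Set.Icc a b) b :=
    sub_mem_posTangentConeAt_of_segment_subset (by rw [segment_symm, segment_eq_Icc hab.le])
  have h : 0 ≤ (a - b) * f' := by
    simpa using hmin.localize.hasFDerivWithinAt_nonneg hf.hasFDerivAt.hasFDerivWithinAt hdir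
  exact nonpos_of_mul_nonneg_right h (sub_neg.2 hab)

/-- The graph of `-ε φ` touches that of `d` from below at `(r, t)`, over the cylinder
`[0, r₀] × [0, T]`. -/
structure IsContactPoint (d φ : ℝ → ℝ → ℝ) (r₀ T ε r t : ℝ) : Prop where
  radius_mem : r ∈ Set.Icc 0 r₀
  time_mem : t ∈ Set.Icc 0 T
  nonneg : ∀ x ∈ Set.Icc 0 r₀, ∀ s ∈ Set.Icc 0 T, 0 ≤ d x s + ε * φ x s
  eq_zero : d r t + ε * φ r t = 0

lemma exists_isContactPoint {d φ : ℝ → ℝ → ℝ} {r₀ T x s : ℝ}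
    (hd : ContinuousOn (Function.uncurry d) (Set.Icc 0 r₀ ×ˢ Set.Icc 0 T))
    (hφ : ContinuousOn (Function.uncurry φ) (Set.Icc 0 r₀ ×ˢ Set.Icc 0 T))
    (hφ_pos : ∀ r ∈ Set.Icc 0 r₀, ∀ t ∈ Set.Icc 0 T, 0 < φ r t)
    (hx : x ∈ Set.Icc 0 r₀) (hs : s ∈ Set.Icc 0 T) (hneg : d x s < 0) :
    ∃ ε > 0, ∃ r t, IsContactPoint d φ r₀ T ε r t := by
  obtain ⟨⟨r, t⟩, ⟨hr, ht⟩, hmin⟩ := (isCompact_Icc.prod isCompact_Icc).exists_isMinOn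
    ⟨(x, s), hx, hs⟩ (hd.div hφ fun p hp => (hφ_pos p.1 hp.1 p.2 hp.2).ne')
  have hmin' (y : ℝ) (hy : y ∈ Set.Icc 0 r₀) (τ : ℝ) (hτ : τ ∈ Set.Icc 0 T) :
      d r t / φ r t ≤ d y τ / φ y τ := hmin (Set.mk_mem_prod hy hτ)
  refine ⟨-(d r t / φ r t), ?_, r, t, hr, ht, fun y hy τ hτ => ?_, ?_⟩
  · exact neg_pos.2 ((hmin' x hx s hs).trans_lt (div_neg_of_neg_of_pos hneg (hφ_pos x hx s hs)))
  · linarith [(le_div_iff₀ (hφ_pos y hy τ hτ)).1 (hmin' y hy τ hτ)]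
  · have := (hφ_pos r hr t ht).ne'
    field_simp
    ring

namespace IsContactPoint

variable {d φ : ℝ → ℝ → ℝ} {r₀ T ε r t : ℝ}

lemma isMinOn_radius (h : IsContactPoint d φ r₀ T ε r t) :
    IsMinOn (fun x => d x t + ε * φ x t) (Set.Icc 0 r₀) r :=
  isMinOn_iff.2 fun x hx => h.eq_zero.trans_le (h.nonneg x hx t h.time_mem)

lemma isMinOn_time (h : IsContactPoint d φ r₀ T ε r t) :
    IsMinOn (fun s => d r s + ε * φ r s) (Set.Icc 0 t) t :=
  isMinOn_iff.2 fun s hs => h.eq_zero.trans_le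
    (h.nonneg r h.radius_mem s (Set.Icc_subset_Icc_right h.time_mem.2 hs))

lemma lt_zero (h : IsContactPoint d φ r₀ T ε r t) (hε : 0 < ε) (hφ : 0 < φ r t) : d r t < 0 := by
  linarith [h.eq_zero, mul_pos hε hφ]

lemma pt_le (h : IsContactPoint d φ r₀ T ε r t) (hd : Differentiable ℝ (Function.uncurry d))
    (hφ : Differentiable ℝ (Function.uncurry φ)) (ht : 0 < t) : pt d r t ≤ -(ε * pt φ r t) := by
  linarith [hasDerivAt_nonpos_of_isMinOn_Icc ht
    ((hasDerivAt_pt hd r t).add ((hasDerivAt_pt hφ r t).const_mul ε)) h.isMinOn_time]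

lemma pr_le (h : IsContactPoint d φ r₀ T ε r₀ t) (hd : Differentiable ℝ (Function.uncurry d))
    (hφ : Differentiable ℝ (Function.uncurry φ)) (hr₀ : 0 < r₀) :
    pr d r₀ t ≤ -(ε * pr φ r₀ t) := by
  linarith [hasDerivAt_nonpos_of_isMinOn_Icc hr₀
    ((hasDerivAt_pr hd r₀ t).add ((hasDerivAt_pr hφ r₀ t).const_mul ε)) h.isMinOn_radius]

lemma frequently_le_radialLaplacian (h : IsContactPoint d φ r₀ T ε r t)
    (hd : ContDiff ℝ 2 (Function.uncurry d)) (hφ : ContDiff ℝ 2 (Function.uncurry φ))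
    (hr : r < r₀) :
    ∃ᶠ ρ in 𝓝[>] r, -(ε * radialLaplacian (fun x => φ x t) ρ) ≤
      radialLaplacian (fun x => d x t) ρ := by
  have hd' := contDiff_radial_slice hd t
  have hφ' := contDiff_radial_slice hφ t
  refine (frequently_radialLaplacian_nonneg (hd'.add (contDiff_const.mul hφ')) h.radius_mem.1 hr
    h.isMinOn_radius).mono fun ρ hρ => ?_
  rw [radialLaplacian_add_const_mul hd' hφ'] at hρ
  linarith

end IsContactPoint

/-- The barrier `e^{l t + k cosh r}` of the minimum principle. The function `cosh r` is smooth at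
the origin and satisfies `Δ cosh = 2 cosh`, so the Laplacian of the barrier is the barrier times a
function that is bounded on a disk. -/
noncomputable def barrier (k l r t : ℝ) : ℝ := exp (l * t + k * cosh r)

section Barrier

variable (k l r t : ℝ)

lemma barrier_pos : 0 < barrier k l r t := exp_pos _

lemma contDiff_barrier {n : WithTop ℕ∞} : ContDiff ℝ n (Function.uncurry (barrier k l)) :=
  ((contDiff_const.mul contDiff_snd).add (contDiff_const.mul contDiff_fst.cosh)).exp

lemma pt_barrier : pt (barrier k l) r t = l * barrier k l r t := by
  have h : HasDerivAt (fun s => l * s + k * cosh r) l t := by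
    simpa using ((hasDerivAt_id t).const_mul l).add_const (k * cosh r)
  rw [mul_comm]
  exact h.exp.deriv

lemma hasDerivAt_barrier_radius :
    HasDerivAt (fun x => barrier k l x t) (k * sinh r * barrier k l r t) r := by
  rw [mul_comm]
  exact (((hasDerivAt_cosh r).const_mul k).const_add (l * t)).exp

lemma pr_barrier : pr (barrier k l) r t = k * sinh r * barrier k l r t :=
  (hasDerivAt_barrier_radius k l r t).deriv

lemma radialLaplacian_barrier (hr : r ≠ 0) :
    radialLaplacian (fun x => barrier k l x t) r =
      (2 * k * cosh r + k ^ 2 * sinh r ^ 2) * barrier k l r t := by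
  have hderiv : deriv (fun x => barrier k l x t) = fun x => k * sinh x * barrier k l x t :=
    funext fun x => pr_barrier k l x t
  have hderiv₂ : deriv (fun x => k * sinh x * barrier k l x t) r =
      k * cosh r * barrier k l r t + k * sinh r * (k * sinh r * barrier k l r t) :=
    (((hasDerivAt_sinh r).const_mul k).mul (hasDerivAt_barrier_radius k l r t)).deriv
  have hsinh : sinh r ≠ 0 := sinh_ne_zero.2 hr
  rw [radialLaplacian, hderiv, hderiv₂]
  field_simp
  ring

end Barrier

lemma IsContactPoint.mul_le_pt {d a c : ℝ → ℝ → ℝ} {k l r₀ T ε r t : ℝ}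
    (h : IsContactPoint d (barrier k l) r₀ T ε r t) (hd : ContDiff ℝ 2 (Function.uncurry d))
    (ha : ContinuousOn (Function.uncurry a) (Set.Icc 0 r₀ ×ˢ Set.Icc 0 T))
    (hc : ContinuousOn (Function.uncurry c) (Set.Icc 0 r₀ ×ˢ Set.Icc 0 T))
    (ha_nonneg : ∀ ρ ∈ Set.Ioo 0 r₀, 0 ≤ a ρ t)
    (h_supersol : ∀ ρ ∈ Set.Ioo 0 r₀,
      a ρ t * radialLaplacian (fun x => d x t) ρ + c ρ t * d ρ t ≤ pt d ρ t)
    (hr : r < r₀) :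
    (a r t * (2 * k * cosh r + k ^ 2 * sinh r ^ 2) + c r t) * d r t ≤ pt d r t := by
  have hmem : ∀ᶠ ρ in 𝓝[>] r, ρ ∈ Set.Ioo r r₀ := Ioo_mem_nhdsGT hr
  have htendsto {f : ℝ → ℝ → ℝ}
      (hf : ContinuousOn (Function.uncurry f) (Set.Icc 0 r₀ ×ˢ Set.Icc 0 T)) :
      Tendsto (fun ρ => f ρ t) (𝓝[>] r) (𝓝 (f r t)) := by
    refine (hf (r, t) ⟨h.radius_mem, h.time_mem⟩).tendsto.comp (f := fun ρ => (ρ, t))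
      (tendsto_nhdsWithin_iff.2 ⟨?_, ?_⟩)
    · exact (Continuous.prodMk_left t).continuousAt.mono_left nhdsWithin_le_nhds
    · exact hmem.mono fun ρ hρ => ⟨⟨h.radius_mem.1.trans hρ.1.le, hρ.2.le⟩, h.time_mem⟩
  have hquot : Continuous fun ρ => 2 * k * cosh ρ + k ^ 2 * sinh ρ ^ 2 := by fun_prop
  have hlim := ((htendsto ha).mul ((((hquot.tendsto r).mono_left nhdsWithin_le_nhds).mul
    (htendsto (contDiff_barrier k l (n := 0)).continuous.continuousOn)).const_mul ε).neg).add
      ((htendsto hc).mul (htendsto hd.continuous.continuousOn))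
  have hpt := htendsto (contDiff_pt hd one_add_one_eq_two.le).continuous.continuousOn
  have hle := le_of_tendsto_of_tendsto_of_frequently hlim hpt <|
    ((h.frequently_le_radialLaplacian hd (contDiff_barrier k l) hr).and_eventually hmem).mono
      fun ρ ⟨hΔ, hrρ, hρr₀⟩ => by
        have hρ : ρ ∈ Set.Ioo 0 r₀ := ⟨h.radius_mem.1.trans_lt hrρ, hρr₀⟩
        rw [radialLaplacian_barrier k l ρ t hρ.1.ne'] at hΔ
        exact (add_le_add_left (mul_le_mul_of_nonneg_left hΔ (ha_nonneg ρ hρ)) _).trans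
          (h_supersol ρ hρ)
  linear_combination hle + a r t * (2 * k * cosh r + k ^ 2 * sinh r ^ 2) * h.eq_zero

lemma IsContactPoint.radius_lt_of_robin {d : ℝ → ℝ → ℝ} {b k l r₀ T ε r t : ℝ}
    (h : IsContactPoint d (barrier k l) r₀ T ε r t) (hd : Differentiable ℝ (Function.uncurry d))
    (hr₀ : 0 < r₀) (hε : 0 < ε) (hb : b < k * sinh r₀) (h_robin : b * d r₀ t ≤ pr d r₀ t) :
    r < r₀ := by
  refine h.radius_mem.2.lt_of_ne ?_
  rintro rfl
  have hpr := h.pr_le hd ((contDiff_barrier k l (n := 1)).differentiable one_ne_zero) hr₀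
  rw [pr_barrier] at hpr
  have hmul := mul_lt_mul_of_neg_right hb (h.lt_zero hε (barrier_pos k l r t))
  refine lt_irrefl (0 : ℝ) ?_
  linear_combination hmul + h_robin + hpr - k * sinh r * h.eq_zero

/-- At a first contact with a multiple of the barrier, the growth rate `l` of the barrier
contradicts the equation, and its slope `k sinh r₀` contradicts the boundary condition. -/
theorem nonneg_of_parabolic_of_robin {d a c : ℝ → ℝ → ℝ} {β : ℝ → ℝ} {r₀ T : ℝ} (hr₀ : 0 < r₀)
    (hd : ContDiff ℝ 2 (Function.uncurry d))
    (ha : ContinuousOn (Function.uncurry a) (Set.Icc 0 r₀ ×ˢ Set.Icc 0 T))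
    (hc : ContinuousOn (Function.uncurry c) (Set.Icc 0 r₀ ×ˢ Set.Icc 0 T))
    (hβ : ContinuousOn β (Set.Icc 0 T))
    (ha_nonneg : ∀ r ∈ Set.Ioo 0 r₀, ∀ t ∈ Set.Ioc 0 T, 0 ≤ a r t)
    (h_supersol : ∀ r ∈ Set.Ioo 0 r₀, ∀ t ∈ Set.Ioc 0 T,
      a r t * radialLaplacian (fun x => d x t) r + c r t * d r t ≤ pt d r t)
    (h_robin : ∀ t ∈ Set.Ioc 0 T, β t * d r₀ t ≤ pr d r₀ t)
    (h_init : ∀ r ∈ Set.Icc 0 r₀, 0 ≤ d r 0) {x s : ℝ} (hx : x ∈ Set.Icc 0 r₀)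
    (hs : s ∈ Set.Icc 0 T) : 0 ≤ d x s := by
  by_contra! hneg
  have hsinh : 0 < sinh r₀ := sinh_pos_iff.2 hr₀
  obtain ⟨B, hB⟩ := isCompact_Icc.exists_bound_of_continuousOn hβ
  obtain ⟨k, hk⟩ : ∃ k, B < k * sinh r₀ :=
    (exists_gt (B / sinh r₀)).imp fun k hk => (div_lt_iff₀ hsinh).1 hk
  have hquot : ContinuousOn (fun p : ℝ × ℝ => Function.uncurry a p *
      (2 * k * cosh p.1 + k ^ 2 * sinh p.1 ^ 2) + Function.uncurry c p)
      (Set.Icc 0 r₀ ×ˢ Set.Icc 0 T) := by fun_prop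
  obtain ⟨N, hN⟩ := (isCompact_Icc.prod isCompact_Icc).exists_bound_of_continuousOn hquot
  obtain ⟨ε, hε, r, t, h⟩ := exists_isContactPoint hd.continuous.continuousOn
    (contDiff_barrier k (N + 1) (n := 0)).continuous.continuousOn
    (fun _ _ _ _ => barrier_pos k (N + 1) _ _) hx hs hneg
  have hd_diff : Differentiable ℝ (Function.uncurry d) := hd.differentiable two_ne_zero
  have hd_neg : d r t < 0 := h.lt_zero hε (barrier_pos k (N + 1) r t)
  have ht : t ∈ Set.Ioc 0 T := by
    refine ⟨h.time_mem.1.lt_of_ne ?_, h.time_mem.2⟩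
    rintro rfl
    exact hd_neg.not_ge (h_init r h.radius_mem)
  have hβt : β t < k * sinh r₀ := ((le_abs_self _).trans (hB t h.time_mem)).trans_lt hk
  have hr : r < r₀ := h.radius_lt_of_robin hd_diff hr₀ hε hβt (h_robin t ht)
  have hpt := h.pt_le hd_diff
    ((contDiff_barrier k (N + 1) (n := 1)).differentiable one_ne_zero) ht.1
  rw [pt_barrier] at hpt
  have hquot_le := (le_abs_self _).trans (hN (r, t) ⟨h.radius_mem, h.time_mem⟩)
  have hmul := mul_le_mul_of_nonpos_right hquot_le hd_neg.le
  have hle := h.mul_le_pt hd ha hc (ha_nonneg · · t ht) (h_supersol · · t ht) hr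
  dsimp only [Function.uncurry_apply_pair] at hmul
  refine lt_irrefl (0 : ℝ) ?_
  linear_combination hd_neg + hmul + hle + hpt - (N + 1) * h.eq_zero

/-! ### Linear differential inequalities -/

lemma integral_exp_mul_le_of_le_deriv {y y' g : ℝ → ℝ} {c a b : ℝ} (hab : a ≤ b)
    (hy : ∀ x ∈ Set.Icc a b, HasDerivAt y (y' x) x) (hg : ContinuousOn g (Set.Icc a b))
    (hle : ∀ x ∈ Set.Ioo a b, g x ≤ y' x + c * y x) :
    ∫ x in a..b, exp (c * x) * g x ≤ exp (c * b) * y b - exp (c * a) * y a := by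
  have hexp (x : ℝ) : HasDerivAt (fun x => exp (c * x)) (exp (c * x) * c) x := by
    simpa using ((hasDerivAt_id x).const_mul c).exp
  have hprod (x : ℝ) (hx : x ∈ Set.Icc a b) :
      HasDerivAt (fun x => exp (c * x) * y x) (exp (c * x) * (y' x + c * y x)) x :=
    ((hexp x).mul (hy x hx)).congr_deriv (by ring)
  have hint : ContinuousOn (fun x => exp (c * x) * g x) (Set.Icc a b) := by fun_prop
  exact intervalIntegral.integral_le_sub_of_hasDeriv_right_of_le hab
    (fun x hx => (hprod x hx).continuousAt.continuousWithinAt)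
    (fun x hx => (hprod x (Set.Ioo_subset_Icc_self hx)).hasDerivWithinAt)
    hint.integrableOn_Icc (fun x hx => mul_le_mul_of_nonneg_left (hle x hx) (exp_pos _).le)

lemma tendsto_atTop_of_le_deriv_add_mul {y y' h : ℝ → ℝ} {c : ℝ} (hc : 0 < c)
    (hy : ∀ᶠ t in atTop, HasDerivAt y (y' t) t) (hh : Tendsto h atTop atTop)
    (hle : ∀ᶠ t in atTop, h t ≤ y' t + c * y t) : Tendsto y atTop atTop := by
  refine tendsto_atTop.2 fun M => ?_
  obtain ⟨s, hs⟩ := eventually_atTop.1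
    (hy.and (hle.and (hh.eventually_ge_atTop (c * (M + 1)))))
  have hgrowth (t : ℝ) (ht : s ≤ t) :
      exp (c * s) * (y s - (M + 1)) ≤ exp (c * t) * (y t - (M + 1)) := by
    have := integral_exp_mul_le_of_le_deriv (y := fun x => y x - (M + 1)) (g := fun _ => 0)
      (c := c) ht (fun x hx => (hs x hx.1).1.sub_const (M + 1)) continuousOn_const
      (fun x hx => by linarith [(hs x hx.1.le).2.1, (hs x hx.1.le).2.2])
    simpa using this
  have hdecay :
      Tendsto (fun t => exp (-(c * t)) * (exp (c * s) * (y s - (M + 1)))) atTop (𝓝 0) := by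
    simpa using (tendsto_exp_neg_atTop_nhds_zero.comp
      (tendsto_id.const_mul_atTop hc)).mul_const (exp (c * s) * (y s - (M + 1)))
  filter_upwards [eventually_ge_atTop s, hdecay.eventually_const_lt neg_one_lt_zero] with t ht hlt
  have hmul := mul_le_mul_of_nonneg_left (hgrowth t ht) (exp_pos (-(c * t))).le
  rw [← mul_assoc (exp (-(c * t))) (exp (c * t)), ← exp_add, neg_add_cancel, exp_zero,
    one_mul] at hmul
  linarith

lemma hasDerivAt_log_log_one_add {t : ℝ} (ht : 0 < t) :
    HasDerivAt (fun t => log (log (1 + t))) ((1 + t)⁻¹ * (log (1 + t))⁻¹) t := by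
  have hpos : 0 < 1 + t := by linarith
  have hlog : 0 < log (1 + t) := log_pos (by linarith)
  refine ((((hasDerivAt_id' t).const_add 1).log hpos.ne').log hlog.ne').congr_deriv ?_
  ring

lemma tendsto_atTop_of_inv_mul_inv_log_le_deriv {f : ℝ → ℝ} {ε T : ℝ} (hf : Differentiable ℝ f)
    (hε : 0 < ε) (hle : ∀ t, T ≤ t → ε * (1 + t)⁻¹ * (log (1 + t))⁻¹ ≤ deriv f t) :
    Tendsto f atTop atTop := by
  set s : ℝ := max T 1
  have hT : T ≤ s := le_max_left _ _
  have hs : 1 ≤ s := le_max_right _ _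
  have hderiv (t : ℝ) (ht : t ∈ Set.Ici s) : HasDerivAt (fun t => f t - ε * log (log (1 + t)))
      (deriv f t - ε * ((1 + t)⁻¹ * (log (1 + t))⁻¹)) t :=
    (hf t).hasDerivAt.sub
      ((hasDerivAt_log_log_one_add (one_pos.trans_le (hs.trans ht))).const_mul ε)
  have hmono : MonotoneOn (fun t => f t - ε * log (log (1 + t))) (Set.Ici s) := by
    refine monotoneOn_of_hasDerivWithinAt_nonneg (convex_Ici s)
      (fun t ht => (hderiv t ht).continuousAt.continuousWithinAt)
      (fun t ht => (hderiv t (interior_subset ht)).hasDerivWithinAt) fun t ht => ?_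
    rw [← mul_assoc]
    exact sub_nonneg.2 (hle t (hT.trans (interior_subset ht)))
  have hloglog : Tendsto (fun t : ℝ => log (log (1 + t))) atTop atTop :=
    tendsto_log_atTop.comp (tendsto_log_atTop.comp (tendsto_atTop_add_const_left _ 1 tendsto_id))
  refine tendsto_atTop_mono' _ ?_ (tendsto_atTop_add_const_right _
    (f s - ε * log (log (1 + s))) (hloglog.const_mul_atTop hε))
  filter_upwards [eventually_ge_atTop s] with t ht
  have hst : f s - ε * log (log (1 + s)) ≤ f t - ε * log (log (1 + t)) :=
    hmono Set.self_mem_Ici ht ht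
  linarith

/-! ### Monotonicity of the flow -/

namespace Setup2

variable {r₀ : ℝ} {T : EReal} {u : ℝ → ℝ → ℝ} {η : ℝ → ℝ} {r t : ℝ}

lemma contDiff_u (S : Setup2 r₀ T u η) (n : ℕ) : ContDiff ℝ n (Function.uncurry u) :=
  S.hu_smooth.of_le (mod_cast le_top)

lemma differentiable_u (S : Setup2 r₀ T u η) : Differentiable ℝ (Function.uncurry u) :=
  (S.contDiff_u 1).differentiable one_ne_zero

lemma contDiff_pt_u (S : Setup2 r₀ T u η) (n : ℕ) : ContDiff ℝ n (Function.uncurry (pt u)) :=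
  contDiff_pt (S.contDiff_u (n + 1)) (mod_cast le_rfl)

lemma hasDerivAt_eta (S : Setup2 r₀ T u η) (t : ℝ) : HasDerivAt η (deriv η t) t :=
  (S.hη_smooth.differentiable two_ne_zero t).hasDerivAt

lemma continuous_deriv_eta (S : Setup2 r₀ T u η) : Continuous (deriv η) :=
  S.hη_smooth.continuous_deriv one_le_two

lemma deriv_eta_nonneg (S : Setup2 r₀ T u η) (ht : 0 ≤ t) : 0 ≤ deriv η t := by
  have hmono : MonotoneOn η (Set.Ici 0) := fun s hs t _ hst => S.hη_mono s t hs hst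
  rw [← (S.hasDerivAt_eta t).differentiableAt.derivWithin (uniqueDiffOn_Ici 0 t ht)]
  exact hmono.derivWithin_nonneg

lemma eta_nonneg (S : Setup2 r₀ T u η) (ht : 0 ≤ t) : 0 ≤ η t := by
  refine le_trans ?_ (S.hη_mono 0 t le_rfl ht)
  rw [S.hη_init]
  exact div_nonneg (cosh_pos _).le (sinh_nonneg_iff.2 S.hr₀.le)

lemma pt_eq (S : Setup2 r₀ T u η) (hr : r ∈ Set.Ioc 0 r₀) (ht : 0 ≤ t) (htT : (t : EReal) < T) :
    pt u r t = exp (-2 * u r t) * (radialLaplacian (fun x => u x t) r + 1) - 1 :=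
  S.hu_evol r t hr ht htT

lemma pt_pt_eq (S : Setup2 r₀ T u η) (hr : r ∈ Set.Ioc 0 r₀) (ht : 0 < t) (htT : (t : EReal) < T) :
    pt (pt u) r t = exp (-2 * u r t) * radialLaplacian (fun x => pt u x t) r +
      -2 * (1 + pt u r t) * pt u r t := by
  have hflow : (fun s => pt u r s) =ᶠ[𝓝 t]
      fun s => exp (-2 * u r s) * (radialLaplacian (fun x => u x s) r + 1) - 1 := by
    filter_upwards [lt_mem_nhds ht,
      continuous_coe_real_ereal.continuousAt.eventually_lt_const htT] with s hs hsT
    exact S.pt_eq hr hs.le hsT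
  have hderiv := (((hasDerivAt_pt S.differentiable_u r t).const_mul (-2)).exp.mul
    ((hasDerivAt_radialLaplacian_slice (S.contDiff_u 3) r t).add_const 1)).sub_const 1
  rw [pt, hflow.deriv_eq]
  refine hderiv.deriv.trans ?_
  linear_combination 2 * pt u r t * S.pt_eq hr ht.le htT

lemma pr_pt_boundary_eq (S : Setup2 r₀ T u η) (ht : 0 < t) (htT : (t : EReal) < T) :
    pr (pt u) r₀ t =
      deriv η t * exp (u r₀ t) + η t * exp (u r₀ t) * pt u r₀ t := by
  have hbdry : (fun s => pr u r₀ s) =ᶠ[𝓝 t] fun s => η s * exp (u r₀ s) - cosh r₀ / sinh r₀ := by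
    filter_upwards [lt_mem_nhds ht,
      continuous_coe_real_ereal.continuousAt.eventually_lt_const htT] with s hs hsT
    exact eq_sub_of_add_eq (S.hbdry s hs.le hsT)
  have hderiv := ((S.hasDerivAt_eta t).mul
    (hasDerivAt_pt S.differentiable_u r₀ t).exp).sub_const (cosh r₀ / sinh r₀)
  rw [pr_pt_comm (S.contDiff_u 2), pt, hbdry.deriv_eq]
  refine hderiv.deriv.trans ?_
  ring

lemma pt_initial_eq_zero (S : Setup2 r₀ T u η) (hr : r ∈ Set.Icc 0 r₀) : pt u r 0 = 0 := by
  have hinterior : Set.EqOn (fun r => pt u r 0) (fun _ => 0) (Set.Ioo 0 r₀) := by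
    intro x hx
    have hzero : (fun y => u y 0) =ᶠ[𝓝 x] fun _ => 0 := by
      filter_upwards [Icc_mem_nhds hx.1 hx.2] with y hy using S.hu_init y hy
    have hderiv : deriv (fun y => u y 0) =ᶠ[𝓝 x] fun _ => 0 := by simpa using hzero.deriv
    have hx' := S.pt_eq (Set.Ioo_subset_Ioc_self hx) le_rfl (mod_cast S.hT)
    simpa [radialLaplacian, hderiv.deriv_eq, hderiv.eq_of_nhds, hzero.eq_of_nhds] using hx'
  have hcont : Continuous fun r => pt u r 0 := (S.contDiff_pt_u 0).continuous.uncurry_right 0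
  have hclosure := hinterior.closure hcont continuous_const
  rw [closure_Ioo S.hr₀.ne] at hclosure
  exact hclosure hr

/-- The time derivative `u_t` solves the linearised flow, with zero initial data and, as `η` is
non-decreasing, with a non-negative boundary source. -/
lemma pt_nonneg (S : Setup2 r₀ T u η) (hr : r ∈ Set.Icc 0 r₀) (ht : 0 ≤ t)
    (htT : (t : EReal) < T) : 0 ≤ pt u r t := by
  have hlt {s : ℝ} (hs : s ∈ Set.Ioc 0 t) : (s : EReal) < T :=
    (EReal.coe_le_coe_iff.2 hs.2).trans_lt htT
  have hu : Continuous (Function.uncurry u) := (S.contDiff_u 0).continuous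
  have hut : Continuous (Function.uncurry (pt u)) := (S.contDiff_pt_u 0).continuous
  refine nonneg_of_parabolic_of_robin (a := fun r s => exp (-2 * u r s))
    (c := fun r s => -2 * (1 + pt u r s)) (β := fun s => η s * exp (u r₀ s)) S.hr₀
    (S.contDiff_pt_u 2) ?_ ?_ ?_ (fun _ _ _ _ => (exp_pos _).le) ?_ ?_
    (fun x hx => (S.pt_initial_eq_zero hx).ge) hr (Set.right_mem_Icc.2 ht)
  · exact (hu.const_mul (-2)).rexp.continuousOn
  · exact ((hut.const_add 1).const_mul (-2)).continuousOn
  · exact (S.hη_smooth.continuous.mul (hu.uncurry_left r₀).rexp).continuousOn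
  · exact fun x hx s hs => (S.pt_pt_eq (Set.Ioo_subset_Ioc_self hx) hs.1 (hlt hs)).ge
  · intro s hs
    rw [S.pr_pt_boundary_eq hs.1 (hlt hs)]
    exact le_add_of_nonneg_left (mul_nonneg (S.deriv_eta_nonneg hs.1.le) (exp_pos _).le)

lemma u_nonneg (S : Setup2 r₀ T u η) (hr : r ∈ Set.Icc 0 r₀) (ht : 0 ≤ t) (htT : (t : EReal) < T) :
    0 ≤ u r t := by
  have hmono : MonotoneOn (fun s => u r s) (Set.Icc 0 t) :=
    monotoneOn_of_hasDerivWithinAt_nonneg (convex_Icc 0 t)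
      ((S.contDiff_u 0).continuous.uncurry_left r).continuousOn
      (fun s _ => (hasDerivAt_pt S.differentiable_u r s).hasDerivWithinAt) fun s hs => by
        have hs' := interior_subset hs
        exact S.pt_nonneg hr hs'.1 ((EReal.coe_le_coe_iff.2 hs'.2).trans_lt htT)
  rw [← S.hu_init r hr]
  exact hmono (Set.left_mem_Icc.2 ht) (Set.right_mem_Icc.2 ht) ht

end Setup2

/-! ### Evolution of the area -/

/-- The area of the disk of radius `r₀` in the metric `e^{2u(·, t)} g₀`. -/
noncomputable def area (r₀ : ℝ) (u : ℝ → ℝ → ℝ) (t : ℝ) : ℝ :=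
  2 * π * ∫ r in (0)..r₀, exp (2 * u r t) * sinh r

/-- The length of the circle of radius `r₀` in the metric `e^{2u(·, t)} g₀`. -/
noncomputable def boundaryLength (r₀ : ℝ) (u : ℝ → ℝ → ℝ) (t : ℝ) : ℝ :=
  2 * π * sinh r₀ * exp (u r₀ t)

/-- The rate of change `-2 ∫ (K + 1)` of the area under the flow, where the total curvature is
`∫ K = 2π - η ℓ` by Gauss-Bonnet. -/
noncomputable def areaRate (r₀ : ℝ) (u : ℝ → ℝ → ℝ) (η : ℝ → ℝ) (t : ℝ) : ℝ :=
  2 * (η t * boundaryLength r₀ u t) - 4 * π - 2 * area r₀ u t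

namespace Setup2

variable {r₀ : ℝ} {T : EReal} {u : ℝ → ℝ → ℝ} {η : ℝ → ℝ} {s t : ℝ}

lemma initialLength_pos (S : Setup2 r₀ T u η) : 0 < 2 * π * sinh r₀ :=
  mul_pos two_pi_pos (sinh_pos_iff.2 S.hr₀)

lemma initialLength_le_boundaryLength (S : Setup2 r₀ T u η) (ht : 0 ≤ t) (htT : (t : EReal) < T) :
    2 * π * sinh r₀ ≤ boundaryLength r₀ u t :=
  le_mul_of_one_le_right S.initialLength_pos.le
    (one_le_exp (S.u_nonneg (Set.right_mem_Icc.2 S.hr₀.le) ht htT))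

lemma hasDerivAt_boundaryLength (S : Setup2 r₀ T u η) (t : ℝ) :
    HasDerivAt (boundaryLength r₀ u) (boundaryLength r₀ u t * pt u r₀ t) t :=
  ((hasDerivAt_pt S.differentiable_u r₀ t).exp.const_mul (2 * π * sinh r₀)).congr_deriv
    (mul_assoc _ _ _).symm

/-- The flow equation makes the integrand the derivative of `2 (sinh r · u_r + cosh r)`. -/
lemma integral_pt_areaDensity (S : Setup2 r₀ T u η) (ht : 0 ≤ t) (htT : (t : EReal) < T) :
    ∫ r in (0)..r₀, (2 * (exp (2 * u r t) * pt u r t) * sinh r + 2 * (exp (2 * u r t) * sinh r)) =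
      2 * (sinh r₀ * pr u r₀ t + cosh r₀ - 1) := by
  have hslice : ContDiff ℝ 2 (fun r => u r t) := contDiff_radial_slice (S.contDiff_u 2) t
  have hcont : Continuous fun r => u r t := hslice.continuous
  have hcont_pt : Continuous fun r => pt u r t := (S.contDiff_pt_u 0).continuous.uncurry_right t
  have hcont_pr : Continuous fun r => pr u r t :=
    (differentiable_deriv_of_contDiff_two hslice).continuous
  have hflux (r : ℝ) (hr : r ∈ Set.Ioo 0 r₀) :
      HasDerivAt (fun x => 2 * (sinh x * pr u x t + cosh x))
        (2 * (exp (2 * u r t) * pt u r t) * sinh r + 2 * (exp (2 * u r t) * sinh r)) r := by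
    refine (((hasDerivAt_sinh_mul_deriv hslice hr.1.ne').add
      (hasDerivAt_cosh r)).const_mul 2).congr_deriv ?_
    have hexp : exp (2 * u r t) * exp (-2 * u r t) = 1 := by
      rw [← exp_add]
      simp
    rw [S.pt_eq (Set.Ioo_subset_Ioc_self hr) ht htT]
    linear_combination -2 * sinh r * (radialLaplacian (fun x => u x t) r + 1) * hexp
  rw [intervalIntegral.integral_eq_sub_of_hasDerivAt_of_le S.hr₀.le
    (by fun_prop) hflux (Continuous.intervalIntegrable (by fun_prop) _ _)]
  simp only [sinh_zero, cosh_zero]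
  ring

lemma hasDerivAt_area (S : Setup2 r₀ T u η) (ht : 0 ≤ t) (htT : (t : EReal) < T) :
    HasDerivAt (area r₀ u) (areaRate r₀ u η t) t := by
  have hdensity : ContDiff ℝ 1 (Function.uncurry fun r s => exp (2 * u r s) * sinh r) :=
    (contDiff_const.mul (S.contDiff_u 1)).exp.mul contDiff_fst.sinh
  have hpt (r : ℝ) : pt (fun r s => exp (2 * u r s) * sinh r) r t =
      2 * (exp (2 * u r t) * pt u r t) * sinh r :=
    ((((hasDerivAt_pt S.differentiable_u r t).const_mul 2).exp.mul_const (sinh r)).congr_deriv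
      (by ring)).deriv
  have hcont : Continuous fun r => u r t := (S.contDiff_u 0).continuous.uncurry_right t
  have hcont_pt : Continuous fun r => pt u r t := (S.contDiff_pt_u 0).continuous.uncurry_right t
  have hflux := S.integral_pt_areaDensity ht htT
  rw [intervalIntegral.integral_add (Continuous.intervalIntegrable (by fun_prop) _ _)
    (Continuous.intervalIntegrable (by fun_prop) _ _), intervalIntegral.integral_const_mul] at hflux
  have hbdry : sinh r₀ * pr u r₀ t + cosh r₀ = η t * (sinh r₀ * exp (u r₀ t)) := by
    have hsinh : sinh r₀ ≠ 0 := sinh_ne_zero.2 S.hr₀.ne'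
    have h := S.hbdry t ht htT
    field_simp at h
    linear_combination h
  refine ((hasDerivAt_intervalIntegral_pt hdensity 0 r₀ t).const_mul (2 * π)).congr_deriv ?_
  simp only [hpt, areaRate, area, boundaryLength]
  linear_combination 2 * π * hflux + 4 * π * hbdry

lemma areaRate_zero (S : Setup2 r₀ T u η) : areaRate r₀ u η 0 = 0 := by
  have harea : ∫ r in (0)..r₀, exp (2 * u r 0) * sinh r = cosh r₀ - 1 := by
    rw [← cosh_zero, ← intervalIntegral.integral_eq_sub_of_hasDerivAt
      (fun r _ => hasDerivAt_cosh r) (continuous_sinh.intervalIntegrable _ _)]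
    refine intervalIntegral.integral_congr fun r hr => ?_
    rw [Set.uIcc_of_le S.hr₀.le] at hr
    simp [S.hu_init r hr]
  have hsinh : sinh r₀ ≠ 0 := sinh_ne_zero.2 S.hr₀.ne'
  rw [areaRate, area, boundaryLength, harea, S.hη_init, S.hu_init r₀ (Set.right_mem_Icc.2 S.hr₀.le),
    exp_zero]
  field_simp
  ring

lemma hasDerivAt_areaRate (S : Setup2 r₀ T u η) (ht : 0 ≤ t) (htT : (t : EReal) < T) :
    HasDerivAt (areaRate r₀ u η) (2 * (deriv η t * boundaryLength r₀ u t +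
      η t * (boundaryLength r₀ u t * pt u r₀ t)) - 2 * areaRate r₀ u η t) t :=
  ((((S.hasDerivAt_eta t).mul (S.hasDerivAt_boundaryLength t)).const_mul 2).sub_const (4 * π)).sub
    ((S.hasDerivAt_area ht htT).const_mul 2)

lemma integral_exp_mul_deriv_eta_le_sub (S : Setup2 r₀ T u η) (hs : 0 ≤ s) (hst : s ≤ t)
    (htT : (t : EReal) < T) :
    2 * (2 * π * sinh r₀) * ∫ y in s..t, exp (2 * y) * deriv η y ≤
      exp (2 * t) * areaRate r₀ u η t - exp (2 * s) * areaRate r₀ u η s := by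
  have hlt {x : ℝ} (hx : x ≤ t) : (x : EReal) < T := (EReal.coe_le_coe_iff.2 hx).trans_lt htT
  have hη' : Continuous (deriv η) := S.continuous_deriv_eta
  have h := integral_exp_mul_le_of_le_deriv (c := 2)
    (g := fun y => 2 * (2 * π * sinh r₀) * deriv η y) hst
    (fun x hx => S.hasDerivAt_areaRate (hs.trans hx.1) (hlt hx.2)) (by fun_prop) fun x hx => by
      have hx0 : 0 ≤ x := hs.trans hx.1.le
      have hlength := S.initialLength_le_boundaryLength hx0 (hlt hx.2.le)
      have hsource : 2 * π * sinh r₀ * deriv η x ≤ deriv η x * boundaryLength r₀ u x := by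
        rw [mul_comm]
        exact mul_le_mul_of_nonneg_left hlength (S.deriv_eta_nonneg hx0)
      have hstretch : 0 ≤ η x * (boundaryLength r₀ u x * pt u r₀ x) :=
        mul_nonneg (S.eta_nonneg hx0) (mul_nonneg (S.initialLength_pos.le.trans hlength)
          (S.pt_nonneg (Set.right_mem_Icc.2 S.hr₀.le) hx0 (hlt hx.2.le)))
      linarith
  rw [← intervalIntegral.integral_const_mul]
  simpa only [mul_left_comm] using h

lemma areaRate_nonneg (S : Setup2 r₀ T u η) (ht : 0 ≤ t) (htT : (t : EReal) < T) :
    0 ≤ areaRate r₀ u η t := by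
  have h := S.integral_exp_mul_deriv_eta_le_sub le_rfl ht htT
  rw [S.areaRate_zero, mul_zero, sub_zero] at h
  have hint : 0 ≤ ∫ y in (0)..t, exp (2 * y) * deriv η y :=
    intervalIntegral.integral_nonneg ht fun y hy =>
      mul_nonneg (exp_pos _).le (S.deriv_eta_nonneg hy.1)
  refine nonneg_of_mul_nonneg_right (le_trans ?_ h) (exp_pos (2 * t))
  exact mul_nonneg (mul_nonneg two_pos.le S.initialLength_pos.le) hint

lemma integral_exp_mul_deriv_eta_le_areaRate (S : Setup2 r₀ T u η) (hs : 0 ≤ s) (hst : s ≤ t)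
    (htT : (t : EReal) < T) :
    2 * (2 * π * sinh r₀) * (exp (-2 * t) * ∫ y in s..t, exp (2 * y) * deriv η y) ≤
      areaRate r₀ u η t := by
  have hs_rate : 0 ≤ exp (2 * s) * areaRate r₀ u η s := mul_nonneg (exp_pos _).le
    (S.areaRate_nonneg hs ((EReal.coe_le_coe_iff.2 hst).trans_lt htT))
  have h := S.integral_exp_mul_deriv_eta_le_sub hs hst htT
  have hexp : exp (-2 * t) * exp (2 * t) = 1 := by
    rw [← exp_add]
    simp
  calc 2 * (2 * π * sinh r₀) * (exp (-2 * t) * ∫ y in s..t, exp (2 * y) * deriv η y)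
      = exp (-2 * t) * (2 * (2 * π * sinh r₀) * ∫ y in s..t, exp (2 * y) * deriv η y) := by ring
    _ ≤ exp (-2 * t) * (exp (2 * t) * areaRate r₀ u η t) :=
        mul_le_mul_of_nonneg_left (by linarith) (exp_pos _).le
    _ = areaRate r₀ u η t := by rw [← mul_assoc, hexp, one_mul]

theorem area_add_integral_le_area (S : Setup2 r₀ T u η) (hs : 0 ≤ s) (hst : s ≤ t)
    (htT : (t : EReal) < T) :
    area r₀ u s + 2 * (2 * π * sinh r₀) *
      ∫ τ in s..t, exp (-2 * τ) * ∫ y in s..τ, exp (2 * y) * deriv η y ≤ area r₀ u t := by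
  have hlt {x : ℝ} (hx : x ≤ t) : (x : EReal) < T := (EReal.coe_le_coe_iff.2 hx).trans_lt htT
  have hη' : Continuous (deriv η) := S.continuous_deriv_eta
  have hrate : Continuous fun τ =>
      2 * (2 * π * sinh r₀) * (exp (-2 * τ) * ∫ y in s..τ, exp (2 * y) * deriv η y) :=
    (Continuous.mul (by fun_prop) (intervalIntegral.continuous_primitive
      (fun _ _ => Continuous.intervalIntegrable (by fun_prop) _ _) s)).const_mul _
  have h := intervalIntegral.integral_le_sub_of_hasDeriv_right_of_le hst
    (fun x hx => (S.hasDerivAt_area (hs.trans hx.1) (hlt hx.2)).continuousAt.continuousWithinAt)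
    (fun x hx => (S.hasDerivAt_area (hs.trans hx.1.le) (hlt hx.2.le)).hasDerivWithinAt)
    hrate.integrableOn_Icc
    fun τ hτ => S.integral_exp_mul_deriv_eta_le_areaRate hs hτ.1.le (hlt hτ.2.le)
  rw [intervalIntegral.integral_const_mul] at h
  linarith

theorem tendsto_area_atTop (S : Setup2 r₀ ⊤ u η) (hη : Tendsto η atTop atTop) :
    Tendsto (area r₀ u) atTop atTop := by
  refine tendsto_atTop_of_le_deriv_add_mul two_pos
    (h := fun t => 2 * (η t * (2 * π * sinh r₀)) - 4 * π)
    ((eventually_ge_atTop 0).mono fun t ht => S.hasDerivAt_area ht (EReal.coe_lt_top t))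
    (tendsto_atTop_add_const_right _ _
      ((hη.atTop_mul_const S.initialLength_pos).const_mul_atTop two_pos)) ?_
  filter_upwards [eventually_ge_atTop 0] with t ht
  have hlength := mul_le_mul_of_nonneg_left
    (S.initialLength_le_boundaryLength ht (EReal.coe_lt_top t)) (S.eta_nonneg ht)
  simp only [areaRate]
  linarith

end Setup2

theorem stmt_18_general {r₀ : ℝ} {T : EReal} {u : ℝ → ℝ → ℝ} {η : ℝ → ℝ} (S : Setup2 r₀ T u η) :
    (∀ t₀ t : ℝ, 0 ≤ t₀ → t₀ ≤ t → (t : EReal) < T →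
      area r₀ u t₀ + 2 * (2 * π * sinh r₀) *
          ∫ τ in t₀..t, exp (-2 * τ) * ∫ y in t₀..τ, exp (2 * y) * deriv η y ≤ area r₀ u t) ∧
    (T = ⊤ → Tendsto η atTop atTop → Tendsto (area r₀ u) atTop atTop) :=
  ⟨fun _ _ => S.area_add_integral_le_area, by rintro rfl; exact S.tendsto_area_atTop⟩

/-- With `T = ∞`, for `0 < t₀ ≤ t` the area
`A(t) = 2π∫₀^{r₀} e^{2u} sinh(r) dr` satisfies
`A(t) ≥ A(t₀) + 2·L₀·∫_{t₀}^t e^{-2τ} (∫_{t₀}^τ e^{2y} η'(y) dy) dτ` with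
`L₀ = 2π sinh(r₀)`; consequently, if `η'(t) ≥ ε(1+t)⁻¹(ln(1+t))⁻¹` for large `t`,
then `A(t) → ∞`. -/
theorem stmt_18 (r₀ : ℝ) (u : ℝ → ℝ → ℝ) (η : ℝ → ℝ)
    (S : Setup2 r₀ ⊤ u η) :
    (∀ t₀ t : ℝ, 0 < t₀ → t₀ ≤ t →
      (2 * Real.pi * ∫ r in (0)..r₀, Real.exp (2 * u r t₀) * Real.sinh r)
        + 2 * (2 * Real.pi * Real.sinh r₀) *
            ∫ τ in t₀..t, Real.exp (-2 * τ) * ∫ y in t₀..τ, Real.exp (2 * y) * deriv η y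
      ≤ 2 * Real.pi * ∫ r in (0)..r₀, Real.exp (2 * u r t) * Real.sinh r) ∧
    ((∃ ε : ℝ, 0 < ε ∧ ∃ T' : ℝ, 0 < T' ∧ ∀ t : ℝ, T' ≤ t →
        ε * (1 + t)⁻¹ * (Real.log (1 + t))⁻¹ ≤ deriv η t) →
      Filter.Tendsto
        (fun t => 2 * Real.pi * ∫ r in (0)..r₀, Real.exp (2 * u r t) * Real.sinh r)
        Filter.atTop Filter.atTop) := by
  have h := stmt_18_general S
  refine ⟨fun t₀ t h₀ ht => h.1 t₀ t h₀.le ht (EReal.coe_lt_top t), ?_⟩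
  rintro ⟨ε, hε, _, -, hη⟩
  exact h.2 rfl (tendsto_atTop_of_inv_mul_inv_log_le_deriv
    (S.hη_smooth.differentiable two_ne_zero) hε hη)
end

section
/- Under the two-dimensional setup with T = ∞, assume additionally that there exist ε > 0 and T' > 0 such that η'(t) ≥ ε (1+t)^{−1} (ln(1+t))^{−1} for all t ≥ T'. Then u(·,t) is non-decreasing in t and converges as t → ∞, uniformly on [0,r₁] for each r₁ ∈ (0,r₀), to a function u_∞ : [0,r₀) → ℝ that satisfies the stationary equation ∂_r²u_∞ + coth(r)·∂_r u_∞ + 1 = e^{2u_∞} on (0,r₀) (i.e., the Gauss curvature of g_∞ = e^{2u_∞} g₀ is identically −1), and ∫₀^{r₀} e^{u_∞(r)} dr = ∞ (i.e., g_∞ is a complete hyperbolic metric on the open geodesic ball of radius r₀). -/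
open Real MeasureTheory Filter

/-!
The proof rests on a comparison principle for the flow: two solutions whose boundary geodesic
curvatures and initial values are ordered stay ordered. Comparing `u` with `0` and with its own time
translates gives `0 ≤ u` and the monotonicity in time.

The limit is the complete hyperbolic metric on the disk of radius `r₀`, with exponential factor
`sinh r₀ / (cosh r₀ - cosh r)`. It is stationary and infinite at `r₀`, hence an upper barrier. For
the lower barrier, pick a time `t₁` with `η t₁ = (1 + δ) coth r₀`, `δ > 0`. From then on the
boundary curvature is at least `(1 + δ) coth r₀`, and `u` stays above the multiples `(1 + y)⁻²` of
the hyperbolic metrics of larger disks, where `y' = -y²`, `y 0 = δ`, and the disks shrink to the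
disk of radius `r₀` proportionally to `y`. The two barriers differ by `O(y) = O(1 / t)` away from
the boundary.
-/

open Set Topology Function

lemma deriv_nonpos_of_forall_Ico_le {f : ℝ → ℝ} {f' a b : ℝ} (hab : a < b)
    (hf : HasDerivAt f f' b) (hmin : ∀ x ∈ Ico a b, f b ≤ f x) : f' ≤ 0 := by
  have hslope := (hasDerivWithinAt_iff_tendsto_slope' self_notMem_Iio).1 hf.hasDerivWithinAt
  refine le_of_tendsto hslope ?_
  filter_upwards [Ico_mem_nhdsLT hab] with x hx
  rw [slope_def_field]
  exact div_nonpos_of_nonneg_of_nonpos (sub_nonneg.2 (hmin x hx)) (sub_nonpos.2 hx.2.le)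

lemma nonneg_of_isMin_left {ρ h h' G : ℝ → ℝ} {a b : ℝ} (hab : a < b)
    (hρ : ∀ x ∈ Ioo a b, 0 < ρ x) (hh : ∀ x ∈ Ico a b, HasDerivAt h (h' x) x)
    (hflux : ∀ x ∈ Ico a b, HasDerivAt (fun x => ρ x * h' x) (ρ x * G x) x)
    (hG : ContinuousWithinAt G (Ico a b) a) (h0 : ρ a * h' a = 0)
    (hmin : ∀ x ∈ Ico a b, h a ≤ h x) : 0 ≤ G a := by
  by_contra! hneg
  have hev : ∀ᶠ x in 𝓝[Ico a b] a, G x < 0 := hG.eventually_lt_const hneg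
  rw [nhdsWithin_Ico_eq_nhdsGE hab] at hev
  obtain ⟨c, hac, hGc⟩ := (mem_nhdsGE_iff_exists_Ico_subset' hab).1
    (hev.and (nhdsWithin_Ico_eq_nhdsGE hab ▸ self_mem_nhdsWithin))
  have hsub : Ico a c ⊆ Ico a b := fun x hx => (hGc hx).2
  have hflux_anti : StrictAntiOn (fun x => ρ x * h' x) (Ico a c) := by
    refine strictAntiOn_of_deriv_neg (convex_Ico a c)
      (fun x hx => (hflux x (hsub hx)).continuousAt.continuousWithinAt) fun x hx => ?_
    rw [interior_Ico] at hx
    have hx' := Ioo_subset_Ico_self hx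
    rw [(hflux x (hsub hx')).deriv]
    exact mul_neg_of_pos_of_neg (hρ x ⟨hx.1, (hsub hx').2⟩) (hGc hx').1
  have hh_anti : StrictAntiOn h (Ico a c) := by
    refine strictAntiOn_of_deriv_neg (convex_Ico a c)
      (fun x hx => (hh x (hsub hx)).continuousAt.continuousWithinAt) fun x hx => ?_
    rw [interior_Ico] at hx
    have hx' := Ioo_subset_Ico_self hx
    rw [(hh x (hsub hx')).deriv]
    have hflux_neg := hflux_anti (left_mem_Ico.2 hac) hx' hx.1
    simp only [h0] at hflux_neg
    exact (pos_iff_neg_of_mul_neg hflux_neg).1 (hρ x ⟨hx.1, (hsub hx').2⟩)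
  obtain ⟨x, hax, hxc⟩ := exists_between (mem_Ioi.1 hac)
  exact (hmin x (hsub ⟨hax.le, hxc⟩)).not_gt (hh_anti (left_mem_Ico.2 hac) ⟨hax.le, hxc⟩ hax)

lemma exists_touching_multiple {X : Type*} [TopologicalSpace X] {K : Set X} {w φ : X → ℝ}
    (hK : IsCompact K) (hw : ContinuousOn w K) (hφ : ContinuousOn φ K)
    (hφ_pos : ∀ x ∈ K, 0 < φ x) (hneg : ∃ x ∈ K, w x < 0) :
    ∃ m > 0, ∃ x₁ ∈ K, w x₁ + m * φ x₁ = 0 ∧ ∀ x ∈ K, 0 ≤ w x + m * φ x := by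
  obtain ⟨x₀, hx₀, hwx₀⟩ := hneg
  obtain ⟨x₁, hx₁, hmin⟩ := hK.exists_isMinOn ⟨x₀, hx₀⟩
    (hw.div hφ fun x hx => (hφ_pos x hx).ne')
  have hle : ∀ x ∈ K, w x₁ / φ x₁ * φ x ≤ w x := fun x hx =>
    (le_div_iff₀ (hφ_pos x hx)).1 (hmin hx)
  refine ⟨-(w x₁ / φ x₁), neg_pos.2 ?_, x₁, hx₁, ?_, fun x hx => by linarith [hle x hx]⟩
  · exact (hmin hx₀).trans_lt (div_neg_of_neg_of_pos hwx₀ (hφ_pos x₀ hx₀))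
  · rw [neg_mul, div_mul_cancel₀ _ (hφ_pos x₁ hx₁).ne', add_neg_cancel]

lemma exp_sub_exp_le (x y : ℝ) : exp x - exp y ≤ exp x * (x - y) := by
  have h : exp y = exp x * exp (y - x) := by rw [← exp_add, add_sub_cancel]
  have := mul_le_mul_of_nonneg_left (add_one_le_exp (y - x)) (exp_pos x).le
  linarith

/-- Linearization of the reaction term of the flow equation in the conformal exponent. -/
lemma le_exp_neg_sub_exp_neg_mul {p q F M A : ℝ} (hqp : q ≤ p) (hM : -M ≤ q) (hA : 0 ≤ A)
    (hF : -A ≤ F) :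
    2 * A * exp (2 * M) * (q - p) ≤ (exp (-2 * q) - exp (-2 * p)) * F := by
  have hexp : exp (-2 * p) ≤ exp (-2 * q) := exp_le_exp.2 (by linarith)
  have hdiff : exp (-2 * q) - exp (-2 * p) ≤ exp (2 * M) * (2 * (p - q)) :=
    calc exp (-2 * q) - exp (-2 * p)
      _ ≤ exp (-2 * q) * (-2 * q - -2 * p) := exp_sub_exp_le _ _
      _ = exp (-2 * q) * (2 * (p - q)) := by ring
      _ ≤ exp (2 * M) * (2 * (p - q)) :=
        mul_le_mul_of_nonneg_right (exp_le_exp.2 (by linarith)) (by linarith)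
  calc 2 * A * exp (2 * M) * (q - p)
    _ = exp (2 * M) * (2 * (p - q)) * -A := by ring
    _ ≤ (exp (-2 * q) - exp (-2 * p)) * -A := mul_le_mul_of_nonpos_right hdiff (by linarith)
    _ ≤ (exp (-2 * q) - exp (-2 * p)) * F := mul_le_mul_of_nonneg_left hF (sub_nonneg.2 hexp)

lemma cosh_le_cosh_of_mem_Icc {r R : ℝ} (hr : r ∈ Icc 0 R) : cosh r ≤ cosh R :=
  cosh_strictMonoOn.monotoneOn hr.1 (hr.1.trans hr.2) hr.2

lemma contDiff_pr_s19 {f : ℝ → ℝ → ℝ} {n : WithTop ℕ∞} (hf : ContDiff ℝ (n + 1) (uncurry f)) :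
    ContDiff ℝ n (uncurry (pr f)) := by
  have : ContDiff ℝ (n + 1) (uncurry fun (p : ℝ × ℝ) x => f x p.2) :=
    hf.comp (contDiff_snd.prodMk (contDiff_snd.comp contDiff_fst))
  exact (this.fderiv contDiff_fst le_rfl).clm_apply contDiff_const

lemma contDiff_pt_s19 {f : ℝ → ℝ → ℝ} {n : WithTop ℕ∞} (hf : ContDiff ℝ (n + 1) (uncurry f)) :
    ContDiff ℝ n (uncurry (pt f)) := by
  have : ContDiff ℝ (n + 1) (uncurry fun (p : ℝ × ℝ) τ => f p.1 τ) :=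
    hf.comp ((contDiff_fst.comp contDiff_fst).prodMk contDiff_snd)
  exact (this.fderiv contDiff_snd le_rfl).clm_apply contDiff_const

lemma hasDerivAt_sinh_mul {g : ℝ → ℝ} {r : ℝ} (hr : r ≠ 0) (hg : DifferentiableAt ℝ g r) :
    HasDerivAt (fun x => sinh x * g x) (sinh r * (deriv g r + cosh r / sinh r * g r)) r := by
  have hs : sinh r ≠ 0 := sinh_eq_zero.not.2 hr
  refine ((hasDerivAt_sinh r).mul hg.hasDerivAt).congr_deriv ?_
  field_simp
  ring

/-! ### Comparison principle -/

/-- A radial function on the geodesic ball of radius `R` over the time interval `[0, τ]`, together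
with its radial derivative `dr`, its time derivative `dt` and its Laplacian `lap` with respect to
the hyperbolic metric `dr² + sinh²(r) dθ²`. The Laplacian is encoded in divergence form
`∂ᵣ(sinh r · ∂ᵣf) = sinh r · Δf`, which, unlike `∂ᵣ²f + coth r · ∂ᵣf`, makes sense at the
origin. -/
structure RadialFunction (R τ : ℝ) where
  toFun : ℝ → ℝ → ℝ
  dr : ℝ → ℝ → ℝ
  dt : ℝ → ℝ → ℝ
  lap : ℝ → ℝ → ℝ
  continuousOn : ContinuousOn (uncurry toFun) (Icc 0 R ×ˢ Icc 0 τ)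
  continuousOn_dr : ContinuousOn (uncurry dr) (Icc 0 R ×ˢ Icc 0 τ)
  continuousOn_lap : ContinuousOn (uncurry lap) (Icc 0 R ×ˢ Icc 0 τ)
  hasDerivAt_dr : ∀ r ∈ Icc 0 R, ∀ t ∈ Icc 0 τ, HasDerivAt (fun x => toFun x t) (dr r t) r
  hasDerivAt_dt : ∀ r ∈ Icc 0 R, ∀ t ∈ Icc 0 τ, HasDerivAt (toFun r) (dt r t) t
  hasDerivAt_flux : ∀ r ∈ Icc 0 R, ∀ t ∈ Icc 0 τ,
    HasDerivAt (fun x => sinh x * dr x t) (sinh r * lap r t) r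

namespace RadialFunction

variable {R τ : ℝ}

instance : CoeFun (RadialFunction R τ) fun _ => ℝ → ℝ → ℝ := ⟨toFun⟩

/-- The zero function, i.e. the conformal exponent of the hyperbolic metric itself. -/
@[simps]
def zero (R τ : ℝ) : RadialFunction R τ where
  toFun _ _ := 0
  dr _ _ := 0
  dt _ _ := 0
  lap _ _ := 0
  continuousOn := continuousOn_const
  continuousOn_dr := continuousOn_const
  continuousOn_lap := continuousOn_const
  hasDerivAt_dr _ _ _ _ := hasDerivAt_const _ _
  hasDerivAt_dt _ _ _ _ := hasDerivAt_const _ _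
  hasDerivAt_flux _ _ _ _ := by simpa using hasDerivAt_const _ _

/-- The linear combination `f + c • g`. -/
@[simps]
def addSMul (f : RadialFunction R τ) (c : ℝ) (g : RadialFunction R τ) : RadialFunction R τ where
  toFun r t := f r t + c * g r t
  dr r t := f.dr r t + c * g.dr r t
  dt r t := f.dt r t + c * g.dt r t
  lap r t := f.lap r t + c * g.lap r t
  continuousOn := f.continuousOn.add (g.continuousOn.const_smul c)
  continuousOn_dr := f.continuousOn_dr.add (g.continuousOn_dr.const_smul c)
  continuousOn_lap := f.continuousOn_lap.add (g.continuousOn_lap.const_smul c)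
  hasDerivAt_dr r hr t ht :=
    (f.hasDerivAt_dr r hr t ht).add ((g.hasDerivAt_dr r hr t ht).const_mul c)
  hasDerivAt_dt r hr t ht :=
    (f.hasDerivAt_dt r hr t ht).add ((g.hasDerivAt_dt r hr t ht).const_mul c)
  hasDerivAt_flux r hr t ht := by
    have h := (f.hasDerivAt_flux r hr t ht).fun_add ((g.hasDerivAt_flux r hr t ht).const_mul c)
    exact (h.congr_of_eventuallyEq (.of_forall fun x => by ring)).congr_deriv (by ring)

lemma lap_nonneg_of_forall_le (f : RadialFunction R τ) {r t : ℝ} (hr : r ∈ Ico 0 R)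
    (ht : t ∈ Icc 0 τ) (hmin : ∀ x ∈ Icc 0 R, f r t ≤ f x t) : 0 ≤ f.lap r t := by
  have hsub : Ico r R ⊆ Icc 0 R := fun x hx => ⟨hr.1.trans hx.1, hx.2.le⟩
  have hflux_zero : sinh r * f.dr r t = 0 := by
    rcases hr.1.eq_or_lt with rfl | hr_pos
    · rw [sinh_zero, zero_mul]
    · have hloc : IsLocalMin (fun x => f x t) r :=
        Filter.mem_of_superset (Icc_mem_nhds hr_pos hr.2) hmin
      rw [hloc.hasDerivAt_eq_zero (f.hasDerivAt_dr r (Ico_subset_Icc_self hr) t ht), mul_zero]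
  have hcont : ContinuousOn (fun x => f.lap x t) (Icc 0 R) :=
    f.continuousOn_lap.comp (by fun_prop : Continuous fun x : ℝ => (x, t)).continuousOn
      fun x hx => ⟨hx, ht⟩
  exact nonneg_of_isMin_left (h := fun x => f x t) (h' := fun x => f.dr x t)
    (G := fun x => f.lap x t) hr.2 (fun x hx => sinh_pos_iff.2 (hr.1.trans_lt hx.1))
    (fun x hx => f.hasDerivAt_dr x (hsub hx) t ht) (fun x hx => f.hasDerivAt_flux x (hsub hx) t ht)
    ((hcont.mono hsub) r (left_mem_Ico.2 hr.2)) hflux_zero fun x hx => hmin x (hsub hx)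

/-- A zero minimum of `w + m φ` with `m > 0` cannot occur where `w` is a supersolution and `φ` a
strict one, for the same linear operator. -/
theorem nonneg_of_strict_barrier (hR : 0 < R) (w φ : RadialFunction R τ)
    (hφ : ∀ r ∈ Icc 0 R, ∀ t ∈ Icc 0 τ, 0 < φ r t) (hinit : ∀ r ∈ Icc 0 R, 0 ≤ w r 0)
    (hint : ∀ r ∈ Ico 0 R, ∀ t ∈ Ioc 0 τ, w r t < 0 → ∃ a c, 0 ≤ a ∧
      a * w.lap r t + c * w r t ≤ w.dt r t ∧ a * φ.lap r t + c * φ r t < φ.dt r t)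
    (hbdry : ∀ t ∈ Ioc 0 τ, w R t < 0 → ∃ β, β * w R t ≤ w.dr R t ∧ β * φ R t < φ.dr R t) :
    ∀ r ∈ Icc 0 R, ∀ t ∈ Icc 0 τ, 0 ≤ w r t := by
  by_contra! ⟨r₀, hr₀, t₀, ht₀, hneg⟩
  obtain ⟨m, hm, ⟨r, t⟩, ⟨hr, ht⟩, htouch, hnonneg⟩ :=
    exists_touching_multiple (isCompact_Icc.prod isCompact_Icc) w.continuousOn φ.continuousOn
      (fun x hx => hφ x.1 hx.1 x.2 hx.2) ⟨(r₀, t₀), ⟨hr₀, ht₀⟩, hneg⟩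
  simp only [uncurry_apply_pair] at hr ht htouch
  have hmin : ∀ x ∈ Icc 0 R, ∀ y ∈ Icc 0 τ, w.addSMul m φ r t ≤ w.addSMul m φ x y :=
    fun x hx y hy => htouch.trans_le (hnonneg (x, y) ⟨hx, hy⟩)
  have hw_neg : w r t < 0 := by linarith [mul_pos hm (hφ r hr t ht)]
  have ht_pos : 0 < t := ht.1.lt_of_ne fun h => (hinit r hr).not_gt (h ▸ hw_neg)
  rcases hr.2.lt_or_eq with hlt | rfl
  · obtain ⟨a, c, ha, hw_super, hφ_super⟩ := hint r ⟨hr.1, hlt⟩ t ⟨ht_pos, ht.2⟩ hw_neg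
    have hlap : 0 ≤ w.lap r t + m * φ.lap r t :=
      (w.addSMul m φ).lap_nonneg_of_forall_le ⟨hr.1, hlt⟩ ht fun x hx => hmin x hx t ht
    have hdt : w.dt r t + m * φ.dt r t ≤ 0 :=
      deriv_nonpos_of_forall_Ico_le ht_pos ((w.addSMul m φ).hasDerivAt_dt r hr t ht)
        fun y hy => hmin r hr y ⟨hy.1, hy.2.le.trans ht.2⟩
    suffices (0 : ℝ) < 0 from this.false
    linear_combination hw_super + m * hφ_super + hdt + a * hlap - c * htouch
  · obtain ⟨β, hw_bdry, hφ_bdry⟩ := hbdry t ⟨ht_pos, ht.2⟩ hw_neg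
    have hdr : w.dr r t + m * φ.dr r t ≤ 0 :=
      deriv_nonpos_of_forall_Ico_le hR ((w.addSMul m φ).hasDerivAt_dr r hr t ht)
        fun x hx => hmin x (Ico_subset_Icc_self hx) t ht
    suffices (0 : ℝ) < 0 from this.false
    linear_combination hw_bdry + m * hφ_bdry + hdr - β * htouch

/-- The barrier `exp (K t + A cosh r)`: a large `A` makes its radial derivative at the boundary
beat any Robin term, and then a large `K` makes it a strict supersolution in the interior. -/
@[simps]
noncomputable def expBarrier (R τ A K : ℝ) : RadialFunction R τ where
  toFun r t := exp (K * t + A * cosh r)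
  dr r t := A * sinh r * exp (K * t + A * cosh r)
  dt r t := K * exp (K * t + A * cosh r)
  lap r t := (2 * A * cosh r + A ^ 2 * sinh r ^ 2) * exp (K * t + A * cosh r)
  continuousOn := by unfold uncurry; fun_prop
  continuousOn_dr := by unfold uncurry; fun_prop
  continuousOn_lap := by unfold uncurry; fun_prop
  hasDerivAt_dr r _ t _ :=
    (((hasDerivAt_cosh r).const_mul A).const_add (K * t)).exp.congr_deriv (by ring)
  hasDerivAt_dt r _ t _ :=
    ((((hasDerivAt_id' t).const_mul K).add_const (A * cosh r)).exp).congr_deriv (by ring)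
  hasDerivAt_flux r _ t _ := by
    have hE := (((hasDerivAt_cosh r).const_mul A).const_add (K * t)).exp
    have h := (((hasDerivAt_sinh r).fun_pow 2).const_mul A).fun_mul hE
    exact (h.congr_of_eventuallyEq (.of_forall fun x => by ring)).congr_deriv (by push_cast; ring)

theorem nonneg_of_linear_inequality (hR : 0 < R) (w : RadialFunction R τ) {a₀ c β : ℝ}
    (hinit : ∀ r ∈ Icc 0 R, 0 ≤ w r 0)
    (hint : ∀ r ∈ Ico 0 R, ∀ t ∈ Ioc 0 τ, w r t < 0 →
      ∃ a ∈ Icc 0 a₀, a * w.lap r t + c * w r t ≤ w.dt r t)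
    (hbdry : ∀ t ∈ Ioc 0 τ, w R t < 0 → β * w R t ≤ w.dr R t) :
    ∀ r ∈ Icc 0 R, ∀ t ∈ Icc 0 τ, 0 ≤ w r t := by
  have hsinh := sinh_pos_iff.2 hR
  set A := (|β| + 1) / sinh R with hA_def
  have : 0 < A := by positivity
  have hβ : β < A * sinh R := by
    rw [hA_def, div_mul_cancel₀ _ hsinh.ne']
    linarith [le_abs_self β]
  set K := a₀ * (2 * A * cosh R + A ^ 2 * sinh R ^ 2) + c + 1
  refine nonneg_of_strict_barrier hR w (expBarrier R τ A K) (fun _ _ _ _ => exp_pos _) hinit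
    (fun r hr t ht hw => ?_) fun t ht hw =>
      ⟨β, hbdry t ht hw, mul_lt_mul_of_pos_right hβ (exp_pos _)⟩
  obtain ⟨a, ha, hw_super⟩ := hint r hr t ht hw
  refine ⟨a, c, ha.1, hw_super, ?_⟩
  have hlap : a * (2 * A * cosh r + A ^ 2 * sinh r ^ 2) ≤
      a₀ * (2 * A * cosh R + A ^ 2 * sinh R ^ 2) := by
    have := ha.1.trans ha.2
    have := cosh_le_cosh_of_mem_Icc (Ico_subset_Icc_self hr)
    have := sinh_le_sinh.2 hr.2.le
    have := sinh_nonneg_iff.2 hr.1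
    have := cosh_pos r
    gcongr
    exact ha.2
  rw [expBarrier_lap, expBarrier_toFun, expBarrier_dt, ← mul_assoc, ← add_mul]
  exact mul_lt_mul_of_pos_right (by linarith) (exp_pos _)

/-- `f` is the exponent of a subsolution of the normalized Ricci flow. -/
def IsSubsolution (f : RadialFunction R τ) : Prop :=
  ∀ r ∈ Ico 0 R, ∀ t ∈ Ioc 0 τ, f.dt r t ≤ exp (-2 * f r t) * (f.lap r t + 1) - 1

/-- `f` is the exponent of a supersolution of the normalized Ricci flow. -/
def IsSupersolution (f : RadialFunction R τ) : Prop :=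
  ∀ r ∈ Ico 0 R, ∀ t ∈ Ioc 0 τ, exp (-2 * f r t) * (f.lap r t + 1) - 1 ≤ f.dt r t

/-- The geodesic curvature of the boundary circle of radius `R` with respect to the conformal
metric `exp (2 f) (dr² + sinh²(r) dθ²)`. -/
noncomputable def boundaryCurvature (f : RadialFunction R τ) (t : ℝ) : ℝ :=
  (f.dr R t + cosh R / sinh R) * exp (-f R t)

lemma exists_forall_abs_le {f : ℝ → ℝ → ℝ} (hf : ContinuousOn (uncurry f) (Icc 0 R ×ˢ Icc 0 τ)) :
    ∃ M, ∀ r ∈ Icc 0 R, ∀ t ∈ Icc 0 τ, |f r t| ≤ M := by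
  obtain ⟨M, hM⟩ := (isCompact_Icc.prod isCompact_Icc).exists_bound_of_continuousOn hf
  exact ⟨M, fun r hr t ht => hM (r, t) ⟨hr, ht⟩⟩

theorem le_of_boundary_inequality (hR : 0 < R) {p q : RadialFunction R τ} (hp : p.IsSubsolution)
    (hq : q.IsSupersolution) (hinit : ∀ r ∈ Icc 0 R, p r 0 ≤ q r 0) {β : ℝ}
    (hbdry : ∀ t ∈ Ioc 0 τ, q R t < p R t → β * (q R t - p R t) ≤ q.dr R t - p.dr R t) :
    ∀ r ∈ Icc 0 R, ∀ t ∈ Icc 0 τ, p r t ≤ q r t := by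
  obtain ⟨M, hM⟩ := exists_forall_abs_le q.continuousOn
  obtain ⟨A, hA⟩ := exists_forall_abs_le p.continuousOn_lap
  suffices ∀ r ∈ Icc 0 R, ∀ t ∈ Icc 0 τ, 0 ≤ q.addSMul (-1) p r t from
    fun r hr t ht => by linarith [this r hr t ht, q.addSMul_toFun (-1) p r t]
  refine nonneg_of_linear_inequality hR (q.addSMul (-1) p) (a₀ := exp (2 * M))
    (c := 2 * A * exp (2 * M)) (β := β) (fun r hr => ?_) (fun r hr t ht hneg => ?_)
    fun t ht hneg => ?_ <;> simp only [addSMul_toFun, addSMul_dr, addSMul_dt, addSMul_lap] at *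
  · linarith [hinit r hr]
  · have hr' := Ico_subset_Icc_self hr
    have ht' := Ioc_subset_Icc_self ht
    have hMq := (abs_le.1 (hM r hr' t ht')).1
    have hAp := abs_le.1 (hA r hr' t ht')
    refine ⟨exp (-2 * q r t), ⟨(exp_pos _).le, exp_le_exp.2 (by linarith)⟩, ?_⟩
    have hreaction := le_exp_neg_sub_exp_neg_mul (p := p r t) (q := q r t) (F := p.lap r t + 1)
      (by linarith) hMq (by linarith) (by linarith : -A ≤ _)
    linear_combination hp r hr t ht + hq r hr t ht + hreaction
  · linear_combination hbdry t ht (by linarith)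

theorem le_of_le_on_boundary (hR : 0 < R) {p q : RadialFunction R τ} (hp : p.IsSubsolution)
    (hq : q.IsSupersolution) (hinit : ∀ r ∈ Icc 0 R, p r 0 ≤ q r 0)
    (hbdry : ∀ t ∈ Ioc 0 τ, p R t ≤ q R t) :
    ∀ r ∈ Icc 0 R, ∀ t ∈ Icc 0 τ, p r t ≤ q r t :=
  le_of_boundary_inequality hR hp hq hinit (β := 0) fun t ht h => absurd h (hbdry t ht).not_gt

theorem le_of_boundaryCurvature_le (hR : 0 < R) {p q : RadialFunction R τ} (hp : p.IsSubsolution)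
    (hq : q.IsSupersolution) (hinit : ∀ r ∈ Icc 0 R, p r 0 ≤ q r 0)
    (hbdry : ∀ t ∈ Ioc 0 τ, p.boundaryCurvature t ≤ q.boundaryCurvature t) :
    ∀ r ∈ Icc 0 R, ∀ t ∈ Icc 0 τ, p r t ≤ q r t := by
  obtain ⟨M, hM⟩ := exists_forall_abs_le p.continuousOn_dr
  refine le_of_boundary_inequality hR hp hq hinit (β := M + cosh R / sinh R) fun t ht hlt => ?_
  have hsinh := sinh_pos_iff.2 hR
  have hMp := abs_le.1 (hM R ⟨hR.le, le_rfl⟩ t (Ioc_subset_Icc_self ht))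
  have hcoth : 0 < cosh R / sinh R := div_pos (cosh_pos R) hsinh
  have hcurv : (p.dr R t + cosh R / sinh R) * exp (q R t - p R t) ≤ q.dr R t + cosh R / sinh R :=
    calc (p.dr R t + cosh R / sinh R) * exp (q R t - p R t)
      _ = p.boundaryCurvature t * exp (q R t) := by
        rw [boundaryCurvature, mul_assoc, ← exp_add, neg_add_eq_sub]
      _ ≤ q.boundaryCurvature t * exp (q R t) := by gcongr; exact hbdry t ht
      _ = q.dr R t + cosh R / sinh R := by
        rw [boundaryCurvature, mul_assoc, ← exp_add, neg_add_cancel, exp_zero, mul_one]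
  have hexp := add_one_le_exp (q R t - p R t)
  have hexp' : exp (q R t - p R t) ≤ 1 := exp_le_one_iff.2 (by linarith)
  calc (M + cosh R / sinh R) * (q R t - p R t)
    _ ≤ (M + cosh R / sinh R) * (exp (q R t - p R t) - 1) :=
      mul_le_mul_of_nonneg_left (by linarith) (by linarith)
    _ ≤ (p.dr R t + cosh R / sinh R) * (exp (q R t - p R t) - 1) :=
      mul_le_mul_of_nonpos_right (by linarith) (by linarith)
    _ ≤ q.dr R t - p.dr R t := by linarith

end RadialFunction

/-! ### Complete hyperbolic metrics on disks -/

/-- The conformal exponent, relative to `dr² + sinh²(r) dθ²`, of the complete hyperbolic metric on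
the disk of radius `arcosh b`: its exponential is `√(b² - 1) / (b - cosh r)`. -/
noncomputable def diskFactor (b r : ℝ) : ℝ := log (b ^ 2 - 1) / 2 - log (b - cosh r)

section DiskFactor

variable {b r : ℝ}

lemma sq_sub_one_pos_of_cosh_lt (h : cosh r < b) : 0 < b ^ 2 - 1 := by
  nlinarith [one_le_cosh r]

lemma exp_diskFactor (h : cosh r < b) : exp (diskFactor b r) = √(b ^ 2 - 1) / (b - cosh r) := by
  have hpos := sq_sub_one_pos_of_cosh_lt h
  rw [diskFactor, ← log_sqrt hpos.le, exp_sub, exp_log (sqrt_pos.2 hpos), exp_log (sub_pos.2 h)]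

lemma exp_two_mul_diskFactor (h : cosh r < b) :
    exp (2 * diskFactor b r) = (b ^ 2 - 1) / (b - cosh r) ^ 2 := by
  rw [two_mul, exp_add, ← sq, exp_diskFactor h, div_pow, sq_sqrt (sq_sub_one_pos_of_cosh_lt h).le]

lemma diskFactor_nonneg (h : cosh r < b) : 0 ≤ diskFactor b r := by
  have hexp : 1 ≤ exp (2 * diskFactor b r) := by
    rw [exp_two_mul_diskFactor h, one_le_div (pow_pos (sub_pos.2 h) 2)]
    nlinarith [one_le_cosh r]
  linarith [one_le_exp_iff.1 hexp]

lemma hasDerivAt_diskFactor (h : cosh r < b) :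
    HasDerivAt (diskFactor b) (sinh r / (b - cosh r)) r := by
  refine ((((hasDerivAt_cosh r).const_sub b).log (sub_pos.2 h).ne').const_sub _).congr_deriv ?_
  rw [neg_div, neg_neg]

lemma hasDerivAt_diskFactor_flux (h : cosh r < b) :
    HasDerivAt (fun x => sinh x * (sinh x / (b - cosh x)))
      (sinh r * (exp (2 * diskFactor b r) - 1)) r := by
  have hne : b - cosh r ≠ 0 := (sub_pos.2 h).ne'
  have hquot := (hasDerivAt_sinh r).fun_div ((hasDerivAt_cosh r).const_sub b) hne
  refine ((hasDerivAt_sinh r).mul hquot).congr_deriv ?_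
  rw [exp_two_mul_diskFactor h]
  field_simp
  linear_combination -sinh r * cosh_sq r

lemma hasDerivAt_diskFactor_comp {c : ℝ → ℝ} {c' t : ℝ} (hc : HasDerivAt c c' t)
    (h : cosh r < c t) :
    HasDerivAt (fun τ => diskFactor (c τ) r)
      (c t * c' / (c t ^ 2 - 1) - c' / (c t - cosh r)) t := by
  have hlog := ((hc.fun_pow 2).sub_const 1).log (sq_sub_one_pos_of_cosh_lt h).ne'
  refine ((hlog.div_const 2).sub ((hc.sub_const (cosh r)).log (sub_pos.2 h).ne')).congr_deriv ?_
  push_cast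
  ring

lemma continuousOn_diskFactor :
    ContinuousOn (fun p : ℝ × ℝ => diskFactor p.1 p.2) {p | cosh p.2 < p.1} := by
  refine ContinuousOn.sub (ContinuousOn.div_const ?_ 2) ?_
  · exact ContinuousOn.log (by fun_prop) fun p hp => (sq_sub_one_pos_of_cosh_lt hp).ne'
  · exact ContinuousOn.log (by fun_prop) fun p hp => (sub_pos.2 hp).ne'

theorem deriv_deriv_diskFactor (hr : r ≠ 0) (h : cosh r < b) :
    deriv (deriv (diskFactor b)) r + cosh r / sinh r * deriv (diskFactor b) r + 1
      = exp (2 * diskFactor b r) := by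
  have hderiv : deriv (diskFactor b) =ᶠ[𝓝 r] fun x => sinh x / (b - cosh x) := by
    filter_upwards [continuous_cosh.continuousAt.eventually_lt_const h] with x hx
    exact (hasDerivAt_diskFactor hx).deriv
  have hdiff : DifferentiableAt ℝ (fun x => sinh x / (b - cosh x)) r :=
    differentiable_sinh.differentiableAt.div (differentiable_cosh.differentiableAt.const_sub b)
      (sub_pos.2 h).ne'
  rw [hderiv.deriv_eq, hderiv.eq_of_nhds]
  have hflux := (hasDerivAt_sinh_mul hr hdiff).unique (hasDerivAt_diskFactor_flux h)
  linarith [mul_left_cancel₀ (sinh_eq_zero.not.2 hr) hflux]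

lemma diskFactor_sub_diskFactor_le {B : ℝ} (h : cosh r < B) (hBb : B ≤ b) :
    diskFactor B r - diskFactor b r ≤ (b - B) / (B - cosh r) := by
  have hB : 0 < B - cosh r := sub_pos.2 h
  have hsq : B ^ 2 ≤ b ^ 2 := pow_le_pow_left₀ ((cosh_pos r).le.trans h.le) hBb 2
  have hlog_sq : log (B ^ 2 - 1) ≤ log (b ^ 2 - 1) :=
    log_le_log (sq_sub_one_pos_of_cosh_lt h) (by linarith)
  have hlog : log (b - cosh r) - log (B - cosh r) ≤ (b - B) / (B - cosh r) := by
    rw [← log_div (by linarith) hB.ne']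
    refine (log_le_sub_one_of_pos (div_pos (by linarith) hB)).trans_eq ?_
    rw [div_sub_one hB.ne', sub_sub_sub_cancel_right]
  unfold diskFactor
  linarith

lemma tendsto_diskFactor_cosh (hr : 0 < r) :
    Tendsto (diskFactor (cosh r)) (𝓝[<] r) atTop := by
  have hsub : Tendsto (fun x => cosh r - cosh x) (𝓝[<] r) (𝓝[>] 0) := by
    refine tendsto_nhdsWithin_iff.2 ⟨?_, ?_⟩
    · have : Continuous fun x => cosh r - cosh x := by fun_prop
      simpa using (this.tendsto r).mono_left nhdsWithin_le_nhds
    · filter_upwards [Ioo_mem_nhdsLT hr] with x hx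
      exact sub_pos.2 (cosh_strictMonoOn hx.1.le hr.le hx.2)
  exact tendsto_atTop_add_const_left _ _
    (tendsto_neg_atBot_atTop.comp (tendsto_log_nhdsGT_zero.comp hsub))

lemma abs_deriv_diskFactor_le {x : ℝ} (hx : x ∈ Ioo 0 r) :
    |deriv (diskFactor (cosh r)) x| ≤ exp (diskFactor (cosh r) x) := by
  have hr := hx.1.trans hx.2
  have hcosh : cosh x < cosh r := cosh_strictMonoOn hx.1.le hr.le hx.2
  have hsinh : 0 < sinh x := sinh_pos_iff.2 hx.1
  rw [(hasDerivAt_diskFactor hcosh).deriv, exp_diskFactor hcosh, ← sinh_sq,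
    sqrt_sq (sinh_pos_iff.2 hr).le, abs_of_pos (div_pos hsinh (sub_pos.2 hcosh))]
  exact div_le_div_of_nonneg_right (sinh_le_sinh.2 hx.2.le) (sub_pos.2 hcosh).le

theorem not_integrableOn_exp_diskFactor (hr : 0 < r) :
    ¬ IntegrableOn (fun x => exp (diskFactor (cosh r) x)) (Ioo 0 r) := by
  -- The integrand dominates the derivative of `diskFactor`, which tends to infinity at `r`.
  refine not_integrableOn_of_tendsto_norm_atTop_of_deriv_isBigO_filter (𝓝[<] r)
    (Ioo_mem_nhdsLT hr) ?_ (tendsto_norm_atTop_atTop.comp (tendsto_diskFactor_cosh hr)) ?_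
  · filter_upwards [Ioo_mem_nhdsLT hr] with x hx
    exact (hasDerivAt_diskFactor (cosh_strictMonoOn hx.1.le hr.le hx.2)).differentiableAt
  · refine Asymptotics.IsBigO.of_bound' ?_
    filter_upwards [Ioo_mem_nhdsLT hr] with x hx
    rw [norm_eq_abs, norm_of_nonneg (exp_pos _).le]
    exact abs_deriv_diskFactor_le hx

end DiskFactor

namespace RadialFunction

variable {R τ : ℝ}

lemma continuousOn_time {c c' : ℝ → ℝ} (hc : ∀ t ∈ Icc 0 τ, HasDerivAt c (c' t) t) :
    ContinuousOn (fun x : ℝ × ℝ => c x.2) (Icc 0 R ×ˢ Icc 0 τ) :=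
  ContinuousOn.comp (fun t ht => (hc t ht).continuousAt.continuousWithinAt) continuousOn_snd
    fun _ hx => hx.2

lemma continuousOn_diskFactor_comp {b b' : ℝ → ℝ} (hb : ∀ t ∈ Icc 0 τ, HasDerivAt b (b' t) t)
    (hRb : ∀ t ∈ Icc 0 τ, cosh R < b t) :
    ContinuousOn (fun x : ℝ × ℝ => diskFactor (b x.2) x.1) (Icc 0 R ×ˢ Icc 0 τ) :=
  ContinuousOn.comp (f := fun x : ℝ × ℝ => (b x.2, x.1)) continuousOn_diskFactor
    ((continuousOn_time hb).prodMk continuousOn_fst)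
    fun x hx => (cosh_le_cosh_of_mem_Icc hx.1).trans_lt (hRb x.2 hx.2)

/-- The homothetic copies, scaled by `s⁻²`, of the complete hyperbolic metrics on the disks of
radius `arcosh b`, for time-dependent `b` and `s`. -/
@[simps]
noncomputable def scaledDisk {b b' s s' : ℝ → ℝ} (hb : ∀ t ∈ Icc 0 τ, HasDerivAt b (b' t) t)
    (hs : ∀ t ∈ Icc 0 τ, HasDerivAt s (s' t) t) (hRb : ∀ t ∈ Icc 0 τ, cosh R < b t)
    (hs_pos : ∀ t ∈ Icc 0 τ, 0 < s t) : RadialFunction R τ where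
  toFun r t := diskFactor (b t) r - log (s t)
  dr r t := sinh r / (b t - cosh r)
  dt r t := b t * b' t / (b t ^ 2 - 1) - b' t / (b t - cosh r) - s' t / s t
  lap r t := exp (2 * diskFactor (b t) r) - 1
  continuousOn := (continuousOn_diskFactor_comp hb hRb).sub
    (ContinuousOn.log (continuousOn_time hs) fun x hx => (hs_pos x.2 hx.2).ne')
  continuousOn_dr := continuous_sinh.comp_continuousOn continuousOn_fst |>.div
    ((continuousOn_time hb).sub (continuous_cosh.comp_continuousOn continuousOn_fst))
    fun x hx => (sub_pos.2 ((cosh_le_cosh_of_mem_Icc hx.1).trans_lt (hRb x.2 hx.2))).ne'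
  continuousOn_lap :=
    (((continuousOn_diskFactor_comp hb hRb).const_smul (2 : ℝ)).rexp).sub continuousOn_const
  hasDerivAt_dr _ hr t ht :=
    (hasDerivAt_diskFactor ((cosh_le_cosh_of_mem_Icc hr).trans_lt (hRb t ht))).sub_const _
  hasDerivAt_dt _ hr t ht :=
    (hasDerivAt_diskFactor_comp (hb t ht)
      ((cosh_le_cosh_of_mem_Icc hr).trans_lt (hRb t ht))).sub ((hs t ht).log (hs_pos t ht).ne')
  hasDerivAt_flux _ hr t ht :=
    hasDerivAt_diskFactor_flux ((cosh_le_cosh_of_mem_Icc hr).trans_lt (hRb t ht))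

lemma scaledDisk_flow_rhs {b b' s s' : ℝ → ℝ} {hb : ∀ t ∈ Icc 0 τ, HasDerivAt b (b' t) t}
    {hs : ∀ t ∈ Icc 0 τ, HasDerivAt s (s' t) t} {hRb : ∀ t ∈ Icc 0 τ, cosh R < b t}
    {hs_pos : ∀ t ∈ Icc 0 τ, 0 < s t} (r : ℝ) {t : ℝ} (ht : t ∈ Icc 0 τ) :
    exp (-2 * scaledDisk hb hs hRb hs_pos r t) * ((scaledDisk hb hs hRb hs_pos).lap r t + 1) - 1
      = s t ^ 2 - 1 := by
  rw [scaledDisk_lap, scaledDisk_toFun, sub_add_cancel, ← exp_add,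
    show -2 * (diskFactor (b t) r - log (s t)) + 2 * diskFactor (b t) r = log (s t) + log (s t) by
      ring, exp_add, exp_log (hs_pos t ht), ← sq]

lemma scaledDisk_boundaryCurvature_le {b b' s s' : ℝ → ℝ}
    {hb : ∀ t ∈ Icc 0 τ, HasDerivAt b (b' t) t} {hs : ∀ t ∈ Icc 0 τ, HasDerivAt s (s' t) t}
    {hRb : ∀ t ∈ Icc 0 τ, cosh R < b t} {hs_pos : ∀ t ∈ Icc 0 τ, 0 < s t} (hR : 0 < R) {t : ℝ}
    (ht : t ∈ Icc 0 τ) :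
    (scaledDisk hb hs hRb hs_pos).boundaryCurvature t ≤ s t * (cosh R / sinh R) := by
  have hcosh := hRb t ht
  have hsub : 0 < b t - cosh R := sub_pos.2 hcosh
  have : 0 < sinh R := sinh_pos_iff.2 hR
  have hroot : 0 < √(b t ^ 2 - 1) := sqrt_pos.2 (sq_sub_one_pos_of_cosh_lt hcosh)
  have hkey : cosh R * b t - 1 ≤ cosh R * √(b t ^ 2 - 1) := by
    refine abs_le_of_sq_le_sq' ?_ (by positivity) |>.2
    rw [mul_pow, sq_sqrt (sq_sub_one_pos_of_cosh_lt hcosh).le]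
    nlinarith [one_le_cosh R]
  calc (scaledDisk hb hs hRb hs_pos).boundaryCurvature t
    _ = s t * ((cosh R * b t - 1) / (sinh R * √(b t ^ 2 - 1))) := by
      rw [boundaryCurvature, scaledDisk_dr, scaledDisk_toFun, neg_sub, exp_sub,
        exp_log (hs_pos t ht), exp_diskFactor hcosh]
      field_simp
      linear_combination -s t * cosh_sq R
    _ ≤ s t * (cosh R * √(b t ^ 2 - 1) / (sinh R * √(b t ^ 2 - 1))) := by
      have := hs_pos t ht
      gcongr
    _ = s t * (cosh R / sinh R) := by rw [mul_div_mul_right _ _ hroot.ne']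

end RadialFunction

/-! ### The lower barrier -/

/-- The solution of `y' = -y²` with `y 0 = δ`. -/
noncomputable def decay (δ t : ℝ) : ℝ := (δ⁻¹ + t)⁻¹

section Decay

variable {δ t : ℝ}

lemma decay_zero (δ : ℝ) : decay δ 0 = δ := by rw [decay, add_zero, inv_inv]

lemma decay_pos (hδ : 0 < δ) (ht : 0 ≤ t) : 0 < decay δ t := by unfold decay; positivity

lemma decay_le (hδ : 0 < δ) (ht : 0 ≤ t) : decay δ t ≤ δ :=
  inv_le_of_inv_le₀ hδ (le_add_of_nonneg_right ht)

lemma hasDerivAt_decay (hδ : 0 < δ) (ht : 0 ≤ t) : HasDerivAt (decay δ) (-decay δ t ^ 2) t := by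
  have hne : δ⁻¹ + t ≠ 0 := by positivity
  refine (((hasDerivAt_id' t).const_add δ⁻¹).fun_inv hne).congr_deriv ?_
  rw [decay, inv_pow, neg_div, one_div]

lemma tendsto_decay (δ : ℝ) : Tendsto (decay δ) atTop (𝓝 0) :=
  tendsto_inv_atTop_zero.comp (tendsto_atTop_add_const_left _ _ tendsto_id)

end Decay

namespace RadialFunction

variable {R τ δ : ℝ}

/-- The lower barrier: with `y = decay δ`, the metric `(1 + y)⁻²` times the hyperbolic metric of the
disk with `b = cosh R + (cosh R / δ²) y`, which shrinks to the disk of radius `R`. The factor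
`cosh R / δ²` makes the barrier nonpositive at time `0`. -/
noncomputable def shrinkingDisk (hδ : 0 < δ) (R τ : ℝ) : RadialFunction R τ :=
  scaledDisk (b := fun t => cosh R + cosh R / δ ^ 2 * decay δ t) (s := fun t => 1 + decay δ t)
    (fun _ ht => ((hasDerivAt_decay hδ ht.1).const_mul _).const_add _)
    (fun _ ht => (hasDerivAt_decay hδ ht.1).const_add _)
    (fun _ ht => lt_add_of_pos_right _
      (mul_pos (div_pos (cosh_pos R) (pow_pos hδ 2)) (decay_pos hδ ht.1)))
    (fun _ ht => add_pos one_pos (decay_pos hδ ht.1))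

lemma shrinkingDisk_isSubsolution (hδ : 0 < δ) : (shrinkingDisk hδ R τ).IsSubsolution := by
  intro r hr t ht
  have ht' := Ioc_subset_Icc_self ht
  rw [shrinkingDisk, scaledDisk_flow_rhs r ht', scaledDisk_dt]
  set C := cosh R / δ ^ 2
  set y := decay δ t
  have hy : 0 < y := decay_pos hδ ht'.1
  have hC : 0 < C := div_pos (cosh_pos R) (pow_pos hδ 2)
  have hcosh : cosh r ≤ cosh R := cosh_le_cosh_of_mem_Icc (Ico_subset_Icc_self hr)
  have hb : cosh r < cosh R + C * y := by linarith [mul_pos hC hy]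
  have hsq := sq_sub_one_pos_of_cosh_lt hb
  have hfirst : (cosh R + C * y) * (C * -y ^ 2) / ((cosh R + C * y) ^ 2 - 1) ≤ 0 :=
    div_nonpos_of_nonpos_of_nonneg (mul_nonpos_of_nonneg_of_nonpos
      ((cosh_pos r).le.trans hb.le) (by nlinarith [mul_pos hC (pow_pos hy 2)])) hsq.le
  have hsecond : C * y ^ 2 / (cosh R + C * y - cosh r) ≤ y := by
    rw [div_le_iff₀ (sub_pos.2 hb)]
    nlinarith
  have hthird : y ^ 2 / (1 + y) ≤ y ^ 2 := div_le_self (sq_nonneg y) (by linarith)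
  rw [mul_neg, neg_div, neg_div] at *
  linarith

lemma shrinkingDisk_zero_nonpos (hδ : 0 < δ) {r : ℝ} (hr : r ∈ Icc 0 R) :
    shrinkingDisk hδ R τ r 0 ≤ 0 := by
  rw [shrinkingDisk, scaledDisk_toFun, decay_zero]
  set b := cosh R + cosh R / δ ^ 2 * δ with hb_def
  have hb : δ * b = (1 + δ) * cosh R := by rw [hb_def]; field_simp; ring
  have hcosh_R : cosh R < b := lt_add_of_pos_right _ (by positivity)
  have hcosh := cosh_le_cosh_of_mem_Icc hr
  rw [sub_nonpos, le_log_iff_exp_le (by linarith), exp_diskFactor (hcosh.trans_lt hcosh_R),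
    div_le_iff₀ (by linarith)]
  calc √(b ^ 2 - 1) ≤ b := sqrt_le_iff.2 ⟨by linarith [cosh_pos R], by linarith⟩
    _ ≤ (1 + δ) * (b - cosh r) := by nlinarith

lemma shrinkingDisk_boundaryCurvature_le (hδ : 0 < δ) (hR : 0 < R) {t : ℝ} (ht : t ∈ Ioc 0 τ) :
    (shrinkingDisk hδ R τ).boundaryCurvature t ≤ (1 + δ) * (cosh R / sinh R) := by
  refine (scaledDisk_boundaryCurvature_le hR (Ioc_subset_Icc_self ht)).trans ?_
  have := div_pos (cosh_pos R) (sinh_pos_iff.2 hR)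
  gcongr
  exact decay_le hδ ht.1.le

lemma diskFactor_sub_shrinkingDisk_le (hδ : 0 < δ) {r r₁ t : ℝ} (hr : r ∈ Icc 0 r₁)
    (hr₁ : cosh r₁ < cosh R) (ht : 0 ≤ t) :
    diskFactor (cosh R) r - shrinkingDisk hδ R τ r t ≤
      (cosh R / δ ^ 2 / (cosh R - cosh r₁) + 1) * decay δ t := by
  have hy := decay_pos hδ ht
  have hcosh := cosh_le_cosh_of_mem_Icc hr
  rw [shrinkingDisk, scaledDisk_toFun]
  set C := cosh R / δ ^ 2
  have hC : 0 < C := div_pos (cosh_pos R) (pow_pos hδ 2)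
  have hCy := mul_pos hC hy
  have hlog := log_le_sub_one_of_pos (add_pos one_pos hy)
  calc diskFactor (cosh R) r - (diskFactor (cosh R + C * decay δ t) r - log (1 + decay δ t))
    _ ≤ C * decay δ t / (cosh R - cosh r) + decay δ t := by
      have := diskFactor_sub_diskFactor_le (hcosh.trans_lt hr₁) (le_add_of_nonneg_right hCy.le)
      rw [add_sub_cancel_left] at this
      linarith
    _ ≤ C * decay δ t / (cosh R - cosh r₁) + decay δ t := by
      have := sub_pos.2 hr₁
      gcongr
    _ = (C / (cosh R - cosh r₁) + 1) * decay δ t := by ring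

end RadialFunction

/-! ### The flow with prescribed boundary curvature -/

namespace Setup2

variable {r₀ : ℝ} {T : EReal} {u : ℝ → ℝ → ℝ} {η : ℝ → ℝ}

lemma contDiff_uncurry (S : Setup2 r₀ T u η) (n : ℕ) : ContDiff ℝ n (uncurry u) :=
  S.hu_smooth.of_le (WithTop.coe_le_coe.2 le_top)

lemma hasDerivAt_pr (S : Setup2 r₀ T u η) (r t : ℝ) :
    HasDerivAt (fun x => u x t) (pr u r t) r :=
  (((S.contDiff_uncurry 1).differentiable one_ne_zero).comp
    (by fun_prop : Differentiable ℝ fun x : ℝ => (x, t)) r).hasDerivAt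

lemma hasDerivAt_pt (S : Setup2 r₀ T u η) (r t : ℝ) : HasDerivAt (u r) (pt u r t) t :=
  (((S.contDiff_uncurry 1).differentiable one_ne_zero).comp
    (by fun_prop : Differentiable ℝ fun τ : ℝ => (r, τ)) t).hasDerivAt

lemma hasDerivAt_sinh_mul_pr (S : Setup2 r₀ T u η) {r t : ℝ} (hr : r ∈ Icc 0 r₀) (ht : 0 ≤ t)
    (htT : (t : EReal) < T) :
    HasDerivAt (fun x => sinh x * pr u x t)
      (sinh r * (exp (2 * u r t) * (pt u r t + 1) - 1)) r := by
  have hdiff : DifferentiableAt ℝ (fun x => pr u x t) r :=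
    ((contDiff_pr_s19 (n := 1) (S.contDiff_uncurry 2)).differentiable one_ne_zero).comp
      (by fun_prop : Differentiable ℝ fun x : ℝ => (x, t)) r
  rcases hr.1.eq_or_lt with rfl | hr_pos
  · refine ((hasDerivAt_sinh 0).mul hdiff.hasDerivAt).congr_deriv ?_
    rw [S.hu_origin t ht htT, sinh_zero, mul_zero, zero_mul, zero_mul, add_zero]
  · refine (hasDerivAt_sinh_mul hr_pos.ne' hdiff).congr_deriv ?_
    rw [S.hu_evol r t ⟨hr_pos, hr.2⟩ ht htT, sub_add_cancel, ← mul_assoc, ← exp_add, neg_mul,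
      add_neg_cancel, exp_zero, one_mul, add_sub_cancel_right]

/-- The flow restricted to the ball of radius `R ≤ r₀` and restarted at time `h`. Its Laplacian is
read off the evolution equation, which makes it continuous up to the origin. -/
@[simps]
noncomputable def flow (S : Setup2 r₀ T u η) {R h τ : ℝ} (hR : R ≤ r₀) (hh : 0 ≤ h)
    (hT : ((h + τ : ℝ) : EReal) < T) : RadialFunction R τ where
  toFun r t := u r (h + t)
  dr r t := pr u r (h + t)
  dt r t := pt u r (h + t)
  lap r t := exp (2 * u r (h + t)) * (pt u r (h + t) + 1) - 1
  continuousOn := ((S.contDiff_uncurry 0).continuous.comp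
    (by fun_prop : Continuous fun x : ℝ × ℝ => (x.1, h + x.2))).continuousOn
  continuousOn_dr := ((contDiff_pr_s19 (n := 0) (S.contDiff_uncurry 1)).continuous.comp
    (by fun_prop : Continuous fun x : ℝ × ℝ => (x.1, h + x.2))).continuousOn
  continuousOn_lap := by
    have hu : Continuous fun x : ℝ × ℝ => u x.1 (h + x.2) :=
      (S.contDiff_uncurry 0).continuous.comp
        (by fun_prop : Continuous fun x : ℝ × ℝ => (x.1, h + x.2))
    have hpt : Continuous fun x : ℝ × ℝ => pt u x.1 (h + x.2) :=
      (contDiff_pt_s19 (n := 0) (S.contDiff_uncurry 1)).continuous.comp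
        (by fun_prop : Continuous fun x : ℝ × ℝ => (x.1, h + x.2))
    exact (((continuous_const.mul hu).rexp.mul (hpt.add_const 1)).sub continuous_const).continuousOn
  hasDerivAt_dr r _ t _ := S.hasDerivAt_pr r (h + t)
  hasDerivAt_dt r _ t _ := (S.hasDerivAt_pt r (h + t)).comp_const_add h t
  hasDerivAt_flux _ hr t ht :=
    S.hasDerivAt_sinh_mul_pr ⟨hr.1, hr.2.trans hR⟩ (add_nonneg hh ht.1)
      ((EReal.coe_le_coe (by linarith [ht.2])).trans_lt hT)

section Flow

variable (S : Setup2 r₀ T u η) {R h τ : ℝ}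

lemma flow_rhs (hR : R ≤ r₀) (hh : 0 ≤ h) (hT : ((h + τ : ℝ) : EReal) < T) (r t : ℝ) :
    exp (-2 * S.flow hR hh hT r t) * ((S.flow hR hh hT).lap r t + 1) - 1
      = (S.flow hR hh hT).dt r t := by
  rw [flow_toFun, flow_lap, flow_dt, sub_add_cancel, ← mul_assoc, ← exp_add, neg_mul,
    neg_add_cancel, exp_zero, one_mul, add_sub_cancel_right]

lemma flow_isSubsolution (hR : R ≤ r₀) (hh : 0 ≤ h) (hT : ((h + τ : ℝ) : EReal) < T) :
    (S.flow hR hh hT).IsSubsolution :=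
  fun r _ t _ => (S.flow_rhs hR hh hT r t).ge

lemma flow_isSupersolution (hR : R ≤ r₀) (hh : 0 ≤ h) (hT : ((h + τ : ℝ) : EReal) < T) :
    (S.flow hR hh hT).IsSupersolution :=
  fun r _ t _ => (S.flow_rhs hR hh hT r t).le

lemma flow_boundaryCurvature (hh : 0 ≤ h) (hT : ((h + τ : ℝ) : EReal) < T) {t : ℝ}
    (ht : t ∈ Ioc 0 τ) : (S.flow le_rfl hh hT).boundaryCurvature t = η (h + t) := by
  rw [RadialFunction.boundaryCurvature, flow_dr, flow_toFun, S.hbdry (h + t) (by linarith [ht.1])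
    ((EReal.coe_le_coe (by linarith [ht.2])).trans_lt hT), mul_assoc, ← exp_add, add_neg_cancel,
    exp_zero, mul_one]

end Flow

theorem nonneg (S : Setup2 r₀ T u η) {r t : ℝ} (hr : r ∈ Icc 0 r₀) (ht : 0 ≤ t)
    (hT : (t : EReal) < T) : 0 ≤ u r t := by
  have hT' : ((0 + t : ℝ) : EReal) < T := by rwa [zero_add]
  have hcomp := RadialFunction.le_of_boundaryCurvature_le S.hr₀
    (p := .zero r₀ t) (q := S.flow le_rfl le_rfl hT') (fun _ _ _ _ => by simp)
    (S.flow_isSupersolution le_rfl le_rfl hT')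
    (fun x hx => by simp [S.hu_init x hx])
    (fun τ hτ => by
      rw [S.flow_boundaryCurvature le_rfl hT' hτ, RadialFunction.boundaryCurvature]
      simpa [S.hη_init] using S.hη_mono 0 τ le_rfl hτ.1.le) r hr t ⟨ht, le_rfl⟩
  simpa using hcomp

theorem mono (S : Setup2 r₀ T u η) {r t₁ t₂ : ℝ} (hr : r ∈ Icc 0 r₀) (ht₁ : 0 ≤ t₁)
    (ht : t₁ ≤ t₂) (hT : (t₂ : EReal) < T) : u r t₁ ≤ u r t₂ := by
  have hT₁ : ((0 + t₁ : ℝ) : EReal) < T :=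
    (EReal.coe_le_coe (by linarith)).trans_lt hT
  have hT₂ : ((t₂ - t₁ + t₁ : ℝ) : EReal) < T := by rwa [sub_add_cancel]
  have hh : 0 ≤ t₂ - t₁ := sub_nonneg.2 ht
  have hcomp := RadialFunction.le_of_boundaryCurvature_le S.hr₀
    (p := S.flow le_rfl le_rfl hT₁) (q := S.flow le_rfl hh hT₂)
    (S.flow_isSubsolution le_rfl le_rfl hT₁) (S.flow_isSupersolution le_rfl hh hT₂)
    (fun x hx => by
      simpa [S.hu_init x hx] using S.nonneg hx hh ((EReal.coe_le_coe (by linarith)).trans_lt hT))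
    (fun τ hτ => by
      rw [S.flow_boundaryCurvature le_rfl hT₁ hτ, S.flow_boundaryCurvature hh hT₂ hτ]
      exact S.hη_mono _ _ (by linarith [hτ.1]) (by linarith)) r hr t₁ ⟨ht₁, le_rfl⟩
  simpa using hcomp

theorem le_diskFactor (S : Setup2 r₀ T u η) {r t : ℝ} (hr : r ∈ Ico 0 r₀) (ht : 0 ≤ t)
    (hT : (t : EReal) < T) : u r t ≤ diskFactor (cosh r₀) r := by
  have hT' : ((0 + t : ℝ) : EReal) < T := by rwa [zero_add]
  obtain ⟨M, hM⟩ := RadialFunction.exists_forall_abs_le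
    ((S.contDiff_uncurry 0).continuous.continuousOn (s := Icc 0 r₀ ×ˢ Icc 0 t))
  obtain ⟨R, hMR, hrR, hRr₀⟩ := (((tendsto_diskFactor_cosh S.hr₀).eventually_ge_atTop M).and
    (Ioo_mem_nhdsLT hr.2)).exists
  have hR : 0 < R := hr.1.trans_lt hrR
  have hcosh : cosh R < cosh r₀ := cosh_strictMonoOn hR.le S.hr₀.le hRr₀
  let q : RadialFunction R t := .scaledDisk (fun τ _ => hasDerivAt_const τ (cosh r₀))
    (fun τ _ => hasDerivAt_const τ 1) (fun _ _ => hcosh) (fun _ _ => one_pos)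
  have hq : q.IsSupersolution := fun x _ τ hτ => by
    rw [RadialFunction.scaledDisk_flow_rhs x (Ioc_subset_Icc_self hτ)]
    simp [q]
  have hcomp := RadialFunction.le_of_le_on_boundary hR (p := S.flow hRr₀.le le_rfl hT') (q := q)
    (S.flow_isSubsolution hRr₀.le le_rfl hT') hq
    (fun x hx => by
      simpa [q, S.hu_init x ⟨hx.1, hx.2.trans hRr₀.le⟩] using
        diskFactor_nonneg ((cosh_le_cosh_of_mem_Icc hx).trans_lt hcosh))
    (fun τ hτ => by
      simpa [q] using ((abs_le.1 (hM R ⟨hR.le, hRr₀.le⟩ τ (Ioc_subset_Icc_self hτ))).2.trans hMR))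
    r ⟨hr.1, hrR.le⟩ t ⟨ht, le_rfl⟩
  simpa [q] using hcomp

theorem shrinkingDisk_le (S : Setup2 r₀ T u η) {δ t₁ r t : ℝ} (hδ : 0 < δ) (ht₁ : 0 ≤ t₁)
    (hη : (1 + δ) * (cosh r₀ / sinh r₀) ≤ η t₁) (hr : r ∈ Icc 0 r₀) (ht : 0 ≤ t)
    (hT : ((t₁ + t : ℝ) : EReal) < T) :
    RadialFunction.shrinkingDisk hδ r₀ t r t ≤ u r (t₁ + t) :=
  RadialFunction.le_of_boundaryCurvature_le S.hr₀ (q := S.flow le_rfl ht₁ hT)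
    (RadialFunction.shrinkingDisk_isSubsolution hδ) (S.flow_isSupersolution le_rfl ht₁ hT)
    (fun x hx => (RadialFunction.shrinkingDisk_zero_nonpos hδ hx).trans <| by
      simpa using S.nonneg hx ht₁ ((EReal.coe_le_coe (by linarith)).trans_lt hT))
    (fun τ hτ => by
      rw [S.flow_boundaryCurvature ht₁ hT hτ]
      exact (RadialFunction.shrinkingDisk_boundaryCurvature_le hδ S.hr₀ hτ).trans <|
        hη.trans (S.hη_mono _ _ ht₁ (by linarith [hτ.1]))) r hr t ⟨ht, le_rfl⟩

lemma exists_boundaryCurvature_gt (S : Setup2 r₀ T u η) :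
    ∃ t₁ ≥ 0, ∃ δ > 0, (1 + δ) * (cosh r₀ / sinh r₀) ≤ η t₁ := by
  obtain ⟨t₀, ht₀, hderiv⟩ := S.hη_incr
  have hmono : StrictMonoOn η (Icc 0 (t₀ / 2)) := by
    refine strictMonoOn_of_deriv_pos (convex_Icc _ _) S.hη_smooth.continuous.continuousOn
      fun t ht => ?_
    rw [interior_Icc] at ht
    exact hderiv t ht.1 (by linarith [ht.2])
  have hlt := hmono ⟨le_rfl, by positivity⟩ ⟨by positivity, le_rfl⟩ (half_pos ht₀)
  have hcoth : 0 < cosh r₀ / sinh r₀ := div_pos (cosh_pos r₀) (sinh_pos_iff.2 S.hr₀)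
  rw [S.hη_init] at hlt
  refine ⟨t₀ / 2, by positivity, η (t₀ / 2) / (cosh r₀ / sinh r₀) - 1,
    sub_pos.2 ((one_lt_div hcoth).2 hlt), ?_⟩
  rw [add_sub_cancel, div_mul_cancel₀ _ hcoth.ne']

theorem tendstoUniformlyOn_diskFactor (S : Setup2 r₀ ⊤ u η) {r₁ : ℝ} (hr₁ : r₁ ∈ Ioo 0 r₀) :
    TendstoUniformlyOn (fun t r => u r t) (diskFactor (cosh r₀)) atTop (Icc 0 r₁) := by
  obtain ⟨t₁, ht₁, δ, hδ, hη⟩ := S.exists_boundaryCurvature_gt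
  have hcosh : cosh r₁ < cosh r₀ := cosh_strictMonoOn hr₁.1.le S.hr₀.le hr₁.2
  set L := cosh r₀ / δ ^ 2 / (cosh r₀ - cosh r₁) + 1
  have hdecay : Tendsto (fun t => L * decay δ (t - t₁)) atTop (𝓝 0) := by
    have hshift : Tendsto (fun t => t - t₁) atTop atTop :=
      tendsto_atTop_add_const_right _ (-t₁) tendsto_id
    simpa only [mul_zero, comp_apply] using ((tendsto_decay δ).comp hshift).const_mul L
  refine Metric.tendstoUniformlyOn_iff.2 fun ε hε => ?_
  filter_upwards [hdecay.eventually_lt_const hε, eventually_ge_atTop t₁] with t hlt ht r hr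
  have hr' : r ∈ Ico 0 r₀ := ⟨hr.1, hr.2.trans_lt hr₁.2⟩
  have hupper := S.le_diskFactor hr' (ht₁.trans ht) (EReal.coe_lt_top t)
  have hlower := S.shrinkingDisk_le hδ ht₁ hη (Ico_subset_Icc_self hr') (sub_nonneg.2 ht)
    (EReal.coe_lt_top _)
  have hgap := RadialFunction.diskFactor_sub_shrinkingDisk_le (τ := t - t₁) hδ hr hcosh
    (sub_nonneg.2 ht)
  rw [add_sub_cancel] at hlower
  rw [dist_eq, abs_of_nonneg (sub_nonneg.2 hupper)]
  linarith

end Setup2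

theorem stmt_19_general (r₀ : ℝ) (u : ℝ → ℝ → ℝ) (η : ℝ → ℝ) (S : Setup2 r₀ ⊤ u η) :
    (∀ r ∈ Icc 0 r₀, ∀ t₁ t₂ : ℝ, 0 ≤ t₁ → t₁ ≤ t₂ → u r t₁ ≤ u r t₂) ∧
    ∃ uInf : ℝ → ℝ,
      (∀ r₁ ∈ Ioo 0 r₀, TendstoUniformlyOn (fun t r => u r t) uInf atTop (Icc 0 r₁)) ∧
      (∀ r ∈ Ioo 0 r₀,
        deriv (deriv uInf) r + cosh r / sinh r * deriv uInf r + 1 = exp (2 * uInf r)) ∧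
      ¬ IntegrableOn (fun r => exp (uInf r)) (Ioo 0 r₀) :=
  ⟨fun _ hr _ t₂ ht₁ ht => S.mono hr ht₁ ht (EReal.coe_lt_top t₂),
    diskFactor (cosh r₀),
    fun _ hr₁ => S.tendstoUniformlyOn_diskFactor hr₁,
    fun _ hr => deriv_deriv_diskFactor hr.1.ne' (cosh_strictMonoOn hr.1.le S.hr₀.le hr.2),
    not_integrableOn_exp_diskFactor S.hr₀⟩

/-- With `T = ∞` and `η'(t) ≥ ε(1+t)⁻¹(ln(1+t))⁻¹` for large `t`:
`u` is non-decreasing in `t` and converges, uniformly on each `[0,r₁] ⊂ [0,r₀)`, to a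
function `u_∞` solving `∂ᵣ²u_∞ + coth(r)·∂ᵣu_∞ + 1 = e^{2u_∞}` on `(0,r₀)` (Gauss
curvature `-1`), with `∫₀^{r₀} e^{u_∞} dr = ∞` (completeness of `g_∞ = e^{2u_∞}g₀`). -/
theorem stmt_19 (r₀ : ℝ) (u : ℝ → ℝ → ℝ) (η : ℝ → ℝ)
    (S : Setup2 r₀ ⊤ u η)
    (hη' : ∃ ε : ℝ, 0 < ε ∧ ∃ T' : ℝ, 0 < T' ∧ ∀ t : ℝ, T' ≤ t →
      ε * (1 + t)⁻¹ * (Real.log (1 + t))⁻¹ ≤ deriv η t) :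
    (∀ r ∈ Set.Icc 0 r₀, ∀ t₁ t₂ : ℝ, 0 ≤ t₁ → t₁ ≤ t₂ → u r t₁ ≤ u r t₂) ∧
    ∃ uInf : ℝ → ℝ,
      (∀ r₁ ∈ Set.Ioo 0 r₀,
        TendstoUniformlyOn (fun t r => u r t) uInf Filter.atTop (Set.Icc 0 r₁)) ∧
      (∀ r ∈ Set.Ioo 0 r₀,
        deriv (deriv uInf) r + Real.cosh r / Real.sinh r * deriv uInf r + 1
          = Real.exp (2 * uInf r)) ∧
      ¬ MeasureTheory.IntegrableOn (fun r => Real.exp (uInf r)) (Set.Ioo 0 r₀) :=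
  stmt_19_general r₀ u η S
end
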